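/- arXiv:2404.11407 — 2 statements merged into one kernel-verified Lean document; each statement's English description precedes it below -/
import Mathlib

section
/- Characterization of Approval-IRV: let f be the elimination scoring rule associated to a monotone scoring system s, defined on profiles of weak orders over all finite candidate sets (of size at least 4 and all smaller sizes arising from restrictions). If f satisfies independence of clones and respects cohesive majorities, then f agrees with Approval-IRV on every profile; equivalently, for every number of candidates m there is a constant λ_m > 0 such that s(τ) = λ_m · (1, 0, …, 0) for every order type τ of weak orders on m candidates. -/
/-!
The proof determines `s` on order types of `M` candidates by strong induction on `M`; the
predicate `App s M` says that `s` is there a positive multiple of `(1, 0, …, 0)`. All profiles are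
described by finitely many ballots with multiplicities (`W s cnt w A` is the winner set).

For any `m ≥ 3`, cohesive majorities together with clones show that the ballots
`a ≻ c ≻ rest` and `a ≻ rest ≻ x` give nothing to their middle class (`Good.two_second`,
`Good.mid_second`), and order the top scores of the simplest types. Two candidates are then
settled immediately and three candidates by explicit profiles on three and four candidates
violating one of the two axioms (`Good.app_three`).

The inductive step rests on `Good.outside`. Let `v` be a ballot on `m ≥ 4` candidates with a pair
of clones `b, b'`, and let `a, c` be two further candidates. Profiles made of `v`, `a ≻ c ≻ rest`,
`rest ≻ a` and `rest ≻ c` can be tuned so that, whenever the score difference of `a` and `c` in `v`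
is not the approval one, the first elimination between `a` and `c` depends on whether `b'` is
present; since the smaller profile is counted by approval, this contradicts independence of clones.
Hence score minus scaled approval is constant off each clone pair of a ballot. For `m ≥ 5` every
weak order has enough clone pairs to make this difference constant, hence zero, everywhere
(`const_of_twins`). For `m = 4` this fails only for the top scores of the types `(2, 2)` and
`(2, 1, 1)`, which are bounded from both sides by further profiles (`Good.four_lower`,
`Good.four_upper`).
-/

open Finset

attribute [local instance] Classical.propDecidable

/-- A weak order on a candidate type `C`: a complete and transitive binary relation. -/
structure WeakOrder (C : Type*) where
  rel : C → C → Prop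
  total : ∀ a b, rel a b ∨ rel b a
  trans : ∀ a b c, rel a b → rel b c → rel a c

namespace WeakOrder

variable {C : Type*}

/-- Strict preference. -/
def strict (w : WeakOrder C) (a b : C) : Prop :=
  w.rel a b ∧ ¬ w.rel b a

/-- Indifference. -/
def indiff (w : WeakOrder C) (a b : C) : Prop :=
  w.rel a b ∧ w.rel b a

/-- The set of top-ranked candidates of `w` within the candidate set `A`. -/
noncomputable def topSet (w : WeakOrder C) (A : Finset C) : Finset C :=
  A.filter fun c => ∀ d ∈ A, w.rel c d

variable [DecidableEq C]

/-- Number of candidates in `A` strictly preferred to `a`. -/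
noncomputable def cardAbove (w : WeakOrder C) (A : Finset C) (a : C) : ℕ :=
  (A.filter fun b => w.strict b a).card

/-- The (0-based) index of the indifference class of `a` within `A`
(0 = top indifference class). -/
noncomputable def classIdx (w : WeakOrder C) (A : Finset C) (a : C) : ℕ :=
  ((A.filter fun b => w.strict b a).image (w.cardAbove A)).card

/-- The number of indifference classes of `w` on `A`. -/
noncomputable def numClasses (w : WeakOrder C) (A : Finset C) : ℕ :=
  (A.image (w.cardAbove A)).card

/-- The order type of `w` on `A`: the list of sizes of its indifference classes,
from the top class downwards. -/
noncomputable def orderType (w : WeakOrder C) (A : Finset C) : List ℕ :=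
  (List.range (w.numClasses A)).map fun j => (A.filter fun a => w.classIdx A a = j).card

end WeakOrder

/-- Weak order induced by a rank function (smaller rank = more preferred). -/
def ofRank {C : Type*} (ρ : C → ℕ) : WeakOrder C where
  rel a b := ρ a ≤ ρ b
  total a b := le_total _ _
  trans _ _ _ hab hbc := le_trans hab hbc

section Rules

variable {C N : Type*} [DecidableEq C] [Fintype N]

/-- The score of candidate `a` in profile `P` on remaining candidate set `A`,
under the scoring system `s` (which maps an order type and a 0-based class index
to a real score). -/
noncomputable def totalScore (s : List ℕ → ℕ → ℝ) (P : N → WeakOrder C)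
    (A : Finset C) (a : C) : ℝ :=
  ∑ i : N, s ((P i).orderType A) ((P i).classIdx A a)

/-- The set of lowest-scoring candidates in `A`. -/
noncomputable def lowest (s : List ℕ → ℕ → ℝ) (P : N → WeakOrder C)
    (A : Finset C) : Finset C :=
  A.filter fun c => ∀ d ∈ A, totalScore s P A c ≤ totalScore s P A d

/-- Fuel-based helper for the elimination scoring rule. -/
noncomputable def winnersAux (s : List ℕ → ℕ → ℝ) (P : N → WeakOrder C) :
    ℕ → Finset C → Finset C
  | 0, A => A
  | n + 1, A =>
    if A.card ≤ 1 then A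
    else (lowest s P A).biUnion fun c => winnersAux s P n (A.erase c)

/-- The elimination scoring rule associated with scoring system `s`: repeatedly
eliminate a lowest-scoring candidate (parallel-universe tie-breaking) until one
candidate remains. -/
noncomputable def winners (s : List ℕ → ℕ → ℝ) (P : N → WeakOrder C)
    (A : Finset C) : Finset C :=
  winnersAux s P A.card A

/-- Approval score: the number of voters ranking `c` in their top indifference
class within `A`. -/
noncomputable def approvalScore (P : N → WeakOrder C) (A : Finset C) (c : C) : ℕ :=
  (Finset.univ.filter fun i => c ∈ (P i).topSet A).card

end Rules

/-- The approval scoring system: `s(τ) = (1,0,…,0)` for every order type `τ`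
(with `s(τ) = (0)` when `|τ| = 1`). -/
noncomputable def approvalScoring : List ℕ → ℕ → ℝ :=
  fun τ j => if j = 0 ∧ 2 ≤ τ.length then 1 else 0

/-- The split scoring system: `s(τ) = (1/τ(1),0,…,0)` for every order type `τ`
(with `s(τ) = (0)` when `|τ| = 1`). -/
noncomputable def splitScoring : List ℕ → ℕ → ℝ :=
  fun τ j => if j = 0 ∧ 2 ≤ τ.length then ((τ.headI : ℝ))⁻¹ else 0

/-- The Borda-style scoring system:
`s(τ) = (m−1, m−1−τ(1), …, m−1−∑_{i<k−1} τ(i))` where `m = τ.sum`. -/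
noncomputable def bordaScoring : List ℕ → ℕ → ℝ :=
  fun τ j => ((τ.sum : ℝ) - 1) - (((τ.take j).sum : ℕ) : ℝ)

/-- Nonnegativity of a scoring system. -/
def NonnegSys (s : List ℕ → ℕ → ℝ) : Prop := ∀ τ j, 0 ≤ s τ j

/-- The last score value of every (nonempty) order type is zero. -/
def LastZeroSys (s : List ℕ → ℕ → ℝ) : Prop :=
  ∀ τ : List ℕ, τ ≠ [] → s τ (τ.length - 1) = 0

/-- Monotonicity of a scoring system: earlier indifference classes get weakly
higher scores. -/
def MonotoneSys (s : List ℕ → ℕ → ℝ) : Prop :=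
  ∀ τ i j, i ≤ j → s τ j ≤ s τ i

section CloneHoverEtc

variable {C N : Type*}

/-- `X` is a clone set in the profile `P` relative to ambient candidate set `A`. -/
def IsCloneSet (P : N → WeakOrder C) (A X : Finset C) : Prop :=
  X ⊆ A ∧ ∀ i : N, ∀ c ∈ A, c ∉ X →
    (∀ x ∈ X, (P i).strict x c) ∨ (∀ x ∈ X, (P i).indiff x c) ∨
      (∀ x ∈ X, (P i).strict c x)

/-- `w2` is obtained from `w` by a `c`-hover: `c` is alone in its (non-top)
indifference class in `w`, and in `w2` it is merged into the indifference class
directly above it, everything else being unchanged. -/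
def IsCHover (w w2 : WeakOrder C) (c : C) : Prop :=
  (∀ x, x ≠ c → ¬ w.indiff c x) ∧
  (∃ b, w.strict b c) ∧
  (∀ a b, a ≠ c → (w2.rel a b ↔ w.rel a b)) ∧
  (∀ b, w2.rel c b ↔ (w.rel c b ∨ ((w.strict b c) ∧ ∀ y, w.strict y c → w.rel b y)))

/-- The sincere coarsening of `w` merging all candidates strictly preferred to
`b` into a single top indifference class, leaving the rest unchanged. -/
def mergeAbove (w : WeakOrder C) (b : C) : WeakOrder C where
  rel u v := w.strict u b ∨ (¬ w.strict v b ∧ w.rel u v)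
  total u v := by
    by_cases hu : w.strict u b
    · exact Or.inl (Or.inl hu)
    · by_cases hv : w.strict v b
      · exact Or.inr (Or.inl hv)
      · rcases w.total u v with h | h
        · exact Or.inl (Or.inr ⟨hv, h⟩)
        · exact Or.inr (Or.inr ⟨hu, h⟩)
  trans u v x huv hvx := by
    rcases huv with h | ⟨hv, huv⟩
    · exact Or.inl h
    · rcases hvx with h | ⟨hx, hvx⟩
      · exact absurd h hv
      · exact Or.inr ⟨hx, w.trans _ _ _ huv hvx⟩

/-- Pairwise majority margin of `a` over `b`. -/
noncomputable def margin [Fintype N] (P : N → WeakOrder C) (a b : C) : ℤ :=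
  ((Finset.univ.filter fun i => (P i).strict a b).card : ℤ) -
    ((Finset.univ.filter fun i => (P i).strict b a).card : ℤ)

end CloneHoverEtc

section STV

variable {C N : Type*} [DecidableEq C] [Fintype C] [Fintype N]

/-- The supporters of `c` among remaining candidates `R`: voters with `c` in
their top indifference class within `R`. -/
noncomputable def suppSet (P : N → WeakOrder C) (R : Finset C) (c : C) : Finset N :=
  Finset.univ.filter fun i => ∀ d ∈ R, (P i).rel c d

/-- A state of the Approval-STV computation: remaining candidates, selected
candidates, and the budget of each voter. -/
structure STVState (C N : Type*) where
  R : Finset C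
  W : Finset C
  b : N → ℝ

/-- One step of Approval-STV with quota `q`: either select an eligible candidate
(whose supporters hold strictly more than `q` budget), charging its supporters a
total of exactly `q`, or, if no candidate is eligible, eliminate some candidate. -/
inductive STVStep (P : N → WeakOrder C) (q : ℝ) : STVState C N → STVState C N → Prop
  | select (R W : Finset C) (b b' : N → ℝ) (c : C) (hc : c ∈ R)
      (helig : q < ∑ i ∈ suppSet P R c, b i)
      (hpay : ∀ i ∉ suppSet P R c, b' i = b i)
      (hdec : ∀ i : N, b' i ≤ b i)
      (hnn : ∀ i : N, 0 ≤ b' i)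
      (htot : ∑ i ∈ suppSet P R c, b' i = (∑ i ∈ suppSet P R c, b i) - q) :
      STVStep P q ⟨R, W, b⟩ ⟨R.erase c, insert c W, b'⟩
  | eliminate (R W : Finset C) (b : N → ℝ) (c : C) (hc : c ∈ R)
      (hnone : ∀ c' ∈ R, (∑ i ∈ suppSet P R c', b i) ≤ q) :
      STVStep P q ⟨R, W, b⟩ ⟨R.erase c, W, b⟩

/-- `W` is a possible outcome of an execution of Approval-STV with quota `q`:
starting from all candidates remaining, empty committee and unit budgets, some
sequence of steps ends with no candidate remaining and committee `W`. -/
def IsSTVOutcome (P : N → WeakOrder C) (q : ℝ) (W : Finset C) : Prop :=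
  ∃ b : N → ℝ,
    Relation.ReflTransGen (STVStep P q) ⟨Finset.univ, ∅, fun _ => 1⟩ ⟨∅, W, b⟩

/-- The closure of `T` with respect to the voter group `S`. -/
noncomputable def closureSet (P : N → WeakOrder C) (S : Finset N) (T : Finset C) :
    Finset C :=
  Finset.univ.filter fun c => ∃ i ∈ S, ∃ t ∈ T, (P i).rel c t

end STV

/-- A weak order is `T`-supporting if every member of `T` is ranked weakly above
every non-member. -/
def IsTSupporting {C : Type*} (w : WeakOrder C) (T : Finset C) : Prop :=
  ∀ t ∈ T, ∀ c, c ∉ T → w.rel t c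

/-! ### Weak orders on a finite set -/

section OrderTypes

variable {C : Type}

lemma strict_cardAbove_lt (w : WeakOrder C) (A : Finset C) {a b : C} (hb : b ∈ A)
    (h : w.strict b a) : w.cardAbove A b < w.cardAbove A a := by
  unfold WeakOrder.cardAbove
  apply Finset.card_lt_card
  rw [Finset.ssubset_iff_of_subset]
  · refine ⟨b, by simp [hb, h], ?_⟩
    simp only [Finset.mem_filter, not_and]
    rintro - ⟨h1, h2⟩
    exact h2 h1
  · intro x hx
    simp only [Finset.mem_filter] at hx ⊢
    refine ⟨hx.1, w.trans _ _ _ hx.2.1 h.1, fun hc => h.2 (w.trans _ _ _ hc hx.2.1)⟩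

lemma rel_cardAbove_le (w : WeakOrder C) (A : Finset C) {a b : C}
    (h : w.rel b a) : w.cardAbove A b ≤ w.cardAbove A a := by
  unfold WeakOrder.cardAbove
  apply Finset.card_le_card
  intro x hx
  simp only [Finset.mem_filter] at hx ⊢
  exact ⟨hx.1, w.trans _ _ _ hx.2.1 h, fun hc => hx.2.2 (w.trans _ _ _ h hc)⟩

lemma strict_iff_not_rel (w : WeakOrder C) (a b : C) : w.strict a b ↔ ¬ w.rel b a := by
  constructor
  · exact fun h => h.2
  · intro h
    exact ⟨(w.total a b).resolve_right h, h⟩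

lemma cardAbove_lt_iff (w : WeakOrder C) (A : Finset C) {a b : C} (hb : b ∈ A) :
    w.cardAbove A b < w.cardAbove A a ↔ w.strict b a := by
  constructor
  · intro h
    rw [strict_iff_not_rel]
    intro hc
    exact absurd (rel_cardAbove_le w A hc) (by omega)
  · exact strict_cardAbove_lt w A hb

lemma classIdx_lt_of_strict (w : WeakOrder C) (A : Finset C) {a b : C} (hb : b ∈ A)
    (h : w.strict b a) : w.classIdx A b < w.classIdx A a := by
  unfold WeakOrder.classIdx
  apply Finset.card_lt_card
  rw [Finset.ssubset_iff_of_subset]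
  · refine ⟨w.cardAbove A b, Finset.mem_image_of_mem _ (by simp [hb, h]), ?_⟩
    simp only [Finset.mem_image, Finset.mem_filter, not_exists, not_and, and_imp]
    intro x hx hs he
    have := strict_cardAbove_lt w A hx hs
    omega
  · apply Finset.image_subset_image
    intro x hx
    simp only [Finset.mem_filter] at hx ⊢
    refine ⟨hx.1, w.trans _ _ _ hx.2.1 h.1, fun hc => h.2 (w.trans _ _ _ hc hx.2.1)⟩

lemma classIdx_le_of_rel (w : WeakOrder C) (A : Finset C) {a b : C}
    (h : w.rel b a) : w.classIdx A b ≤ w.classIdx A a := by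
  unfold WeakOrder.classIdx
  apply Finset.card_le_card
  apply Finset.image_subset_image
  intro x hx
  simp only [Finset.mem_filter] at hx ⊢
  exact ⟨hx.1, w.trans _ _ _ hx.2.1 h, fun hc => hx.2.2 (w.trans _ _ _ h hc)⟩

lemma classIdx_lt_numClasses (w : WeakOrder C) (A : Finset C) {a : C} (ha : a ∈ A) :
    w.classIdx A a < w.numClasses A := by
  unfold WeakOrder.classIdx WeakOrder.numClasses
  apply Finset.card_lt_card
  rw [Finset.ssubset_iff_of_subset]
  · refine ⟨w.cardAbove A a, Finset.mem_image_of_mem _ ha, ?_⟩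
    simp only [Finset.mem_image, Finset.mem_filter, not_exists, not_and, and_imp]
    intro x hx hs he
    have := strict_cardAbove_lt w A hx hs
    omega
  · exact Finset.image_subset_image (Finset.filter_subset _ _)

lemma card_image_le_card_image {α β γ : Type*} [DecidableEq β] [DecidableEq γ]
    (S : Finset α) (f : α → β) (g : α → γ)
    (h : ∀ x ∈ S, ∀ y ∈ S, g x = g y → f x = f y) : (S.image f).card ≤ (S.image g).card := by
  rcases S.eq_empty_or_nonempty with rfl | ⟨x₀, _⟩
  · simp
  have : Nonempty α := ⟨x₀⟩
  have hc : ∀ b ∈ S.image f, ∃ x ∈ S, f x = b := fun b hb => by simpa using hb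
  choose! p hp hfp using hc
  refine Finset.card_le_card_of_injOn (fun b => g (p b)) ?_ ?_
  · intro b hb
    exact Finset.mem_coe.2 (Finset.mem_image_of_mem _ (hp b hb))
  · intro b hb b' hb' hbb
    rw [← hfp b hb, ← hfp b' hb']
    exact h _ (hp b hb) _ (hp b' hb') hbb

lemma card_image_eq_card_image {α β γ : Type*} [DecidableEq β] [DecidableEq γ]
    (S : Finset α) (f : α → β) (g : α → γ)
    (h : ∀ x ∈ S, ∀ y ∈ S, f x = f y ↔ g x = g y) : (S.image f).card = (S.image g).card :=
  le_antisymm (card_image_le_card_image S f g fun x hx y hy => (h x hx y hy).2)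
    (card_image_le_card_image S g f fun x hx y hy => (h x hx y hy).1)

lemma image_classIdx (w : WeakOrder C) (A : Finset C) :
    A.image (w.classIdx A) = Finset.range (w.numClasses A) := by
  apply Finset.eq_of_subset_of_card_le
  · intro j hj
    obtain ⟨a, ha, rfl⟩ := Finset.mem_image.1 hj
    exact Finset.mem_range.2 (classIdx_lt_numClasses w A ha)
  · rw [Finset.card_range]
    unfold WeakOrder.numClasses
    apply card_image_le_card_image
    intro x hx y hy hxy
    apply le_antisymm <;> apply rel_cardAbove_le
    · by_contra hc
      have := classIdx_lt_of_strict w A hy ((strict_iff_not_rel w y x).2 hc)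
      omega
    · by_contra hc
      have := classIdx_lt_of_strict w A hx ((strict_iff_not_rel w x y).2 hc)
      omega

lemma length_orderType (w : WeakOrder C) (A : Finset C) :
    (w.orderType A).length = w.numClasses A := by
  simp [WeakOrder.orderType]

lemma sum_orderType (w : WeakOrder C) (A : Finset C) : (w.orderType A).sum = A.card := by
  unfold WeakOrder.orderType
  rw [Finset.card_eq_sum_card_fiberwise (f := w.classIdx A) (t := Finset.range (w.numClasses A))]
  · rw [Finset.sum_range, ← List.sum_ofFn]
    congr 1
    apply List.ext_getElem <;> simp
  · intro a ha
    exact Finset.mem_coe.2 (Finset.mem_range.2 (classIdx_lt_numClasses w A ha))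

lemma orderType_pos (w : WeakOrder C) (A : Finset C) : ∀ x ∈ w.orderType A, 0 < x := by
  unfold WeakOrder.orderType
  intro x hx
  obtain ⟨j, hj, rfl⟩ := List.mem_map.1 hx
  have : j ∈ A.image (w.classIdx A) := by
    rw [image_classIdx]; simpa using hj
  obtain ⟨a, ha, rfl⟩ := Finset.mem_image.1 this
  exact Finset.card_pos.2 ⟨a, by simp [ha]⟩

lemma classIdx_eq_zero_iff (w : WeakOrder C) (A : Finset C) {a : C} (ha : a ∈ A) :
    w.classIdx A a = 0 ↔ a ∈ w.topSet A := by
  unfold WeakOrder.classIdx WeakOrder.topSet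
  rw [Finset.card_eq_zero, Finset.image_eq_empty, Finset.filter_eq_empty_iff, Finset.mem_filter]
  constructor
  · intro h
    refine ⟨ha, fun d hd => ?_⟩
    by_contra hc
    exact h hd ((strict_iff_not_rel w d a).2 hc)
  · rintro ⟨-, h⟩ d hd hs
    exact hs.2 (h d hd)

lemma mem_topSet (w : WeakOrder C) (A : Finset C) (a : C) :
    a ∈ w.topSet A ↔ a ∈ A ∧ ∀ d ∈ A, w.rel a d := by
  unfold WeakOrder.topSet
  rw [Finset.mem_filter]

lemma ofRank_strict (ρ : C → ℕ) (a b : C) : (ofRank ρ).strict a b ↔ ρ a < ρ b := by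
  simp only [WeakOrder.strict, ofRank]; omega

lemma cardAbove_ofRank_eq_iff (ρ : C → ℕ) (A : Finset C) {x y : C} (hx : x ∈ A) (hy : y ∈ A) :
    (ofRank ρ).cardAbove A x = (ofRank ρ).cardAbove A y ↔ ρ x = ρ y := by
  have h1 := cardAbove_lt_iff (ofRank ρ) A (a := y) hx
  have h2 := cardAbove_lt_iff (ofRank ρ) A (a := x) hy
  rw [ofRank_strict] at h1 h2
  omega

lemma numClasses_ofRank (ρ : C → ℕ) (A : Finset C) (k : ℕ) (h : A.image ρ = Finset.range k) :
    (ofRank ρ).numClasses A = k := by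
  unfold WeakOrder.numClasses
  rw [card_image_eq_card_image A _ ρ, h, Finset.card_range]
  exact fun x hx y hy => cardAbove_ofRank_eq_iff ρ A hx hy

lemma classIdx_ofRank (ρ : C → ℕ) (A : Finset C) (k : ℕ) (h : A.image ρ = Finset.range k)
    {a : C} (ha : a ∈ A) : (ofRank ρ).classIdx A a = ρ a := by
  unfold WeakOrder.classIdx
  rw [card_image_eq_card_image _ _ ρ]
  · rw [show (A.filter fun b => (ofRank ρ).strict b a).image ρ = Finset.range (ρ a) from ?_,
      Finset.card_range]
    ext j
    simp only [Finset.mem_image, Finset.mem_filter, ofRank_strict, Finset.mem_range]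
    constructor
    · rintro ⟨x, ⟨-, hx⟩, rfl⟩; exact hx
    · intro hj
      have hk : ρ a ∈ Finset.range k := h ▸ Finset.mem_image_of_mem ρ ha
      have : j ∈ A.image ρ := by
        rw [h]; rw [Finset.mem_range] at hk ⊢; omega
      obtain ⟨x, hx, rfl⟩ := Finset.mem_image.1 this
      exact ⟨x, ⟨hx, hj⟩, rfl⟩
  · intro x hx y hy
    exact cardAbove_ofRank_eq_iff ρ A (Finset.mem_filter.1 hx).1 (Finset.mem_filter.1 hy).1

/-- The score that a single ballot `w`, restricted to `A`, gives to `a`. -/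
noncomputable def sc (s : List ℕ → ℕ → ℝ) (w : WeakOrder C) (A : Finset C) (a : C) : ℝ :=
  s (w.orderType A) (w.classIdx A a)

lemma sc_ofRank (s : List ℕ → ℕ → ℝ) (ρ : C → ℕ) (A : Finset C) (k : ℕ)
    (h : A.image ρ = Finset.range k) {a : C} (ha : a ∈ A) :
    sc s (ofRank ρ) A a =
      s ((List.range k).map fun j => (A.filter fun x => ρ x = j).card) (ρ a) := by
  unfold sc WeakOrder.orderType
  rw [classIdx_ofRank ρ A k h ha, numClasses_ofRank ρ A k h]
  congr 1
  apply List.map_congr_left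
  intro j _
  congr 1
  apply Finset.filter_congr
  intro x hx
  rw [classIdx_ofRank ρ A k h hx]

lemma sc_congr (s : List ℕ → ℕ → ℝ) (w w' : WeakOrder C) (A : Finset C)
    (h : ∀ x ∈ A, ∀ y ∈ A, w.rel x y ↔ w'.rel x y) {a : C} (ha : a ∈ A) :
    sc s w A a = sc s w' A a := by
  have hs : ∀ x ∈ A, ∀ y ∈ A, w.strict x y ↔ w'.strict x y := by
    intro x hx y hy
    rw [strict_iff_not_rel, strict_iff_not_rel, h y hy x hx]
  have hca : ∀ x ∈ A, w.cardAbove A x = w'.cardAbove A x := by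
    intro x hx
    unfold WeakOrder.cardAbove
    congr 1
    exact Finset.filter_congr fun y hy => hs y hy x hx
  have hci : ∀ x ∈ A, w.classIdx A x = w'.classIdx A x := by
    intro x hx
    unfold WeakOrder.classIdx
    rw [Finset.filter_congr fun y hy => hs y hy x hx]
    congr 1
    exact Finset.image_congr fun y hy => hca y (Finset.mem_filter.1 (Finset.mem_coe.1 hy)).1
  have hnc : w.numClasses A = w'.numClasses A := by
    unfold WeakOrder.numClasses
    congr 1
    exact Finset.image_congr fun y hy => hca y (Finset.mem_coe.1 hy)
  have hot : w.orderType A = w'.orderType A := by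
    unfold WeakOrder.orderType
    rw [hnc]
    congr 1
    funext j
    congr 1
    exact Finset.filter_congr fun y hy => by rw [hci y hy]
  unfold sc
  rw [hot, hci a ha]

/-- Evaluation of a ballot's score: if on `A` the ballot is given by a rank function `ρ` whose
fibres have the sizes listed in `L`, then its order type is `L` and `a` lies in class `ρ a`. -/
lemma sc_eq (s : List ℕ → ℕ → ℝ) (w : WeakOrder C) (A : Finset C) (ρ : C → ℕ) (L : List ℕ)
    (hrel : ∀ x ∈ A, ∀ y ∈ A, w.rel x y ↔ ρ x ≤ ρ y) (hlt : ∀ x ∈ A, ρ x < L.length)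
    (hL : ∀ (j : ℕ) (h : j < L.length), (A.filter fun x => ρ x = j).card = L[j])
    (hpos : ∀ x ∈ L, 0 < x) {a : C} (ha : a ∈ A) : sc s w A a = s L (ρ a) := by
  rw [sc_congr s w (ofRank ρ) A hrel ha, sc_ofRank s ρ A L.length _ ha]
  · congr 1
    apply List.ext_getElem
    · simp
    · intro j h1 h2
      simp only [List.getElem_map, List.getElem_range]
      exact hL j h2
  · ext j
    simp only [Finset.mem_image, Finset.mem_range]
    constructor
    · rintro ⟨x, hx, rfl⟩
      exact hlt x hx
    · intro hj
      have h1 := hpos _ (List.getElem_mem hj)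
      rw [← hL j hj] at h1
      obtain ⟨x, hx⟩ := Finset.card_pos.1 h1
      exact ⟨x, (Finset.mem_filter.1 hx).1, (Finset.mem_filter.1 hx).2⟩

end OrderTypes

/-! ### Elimination on weighted profiles -/

section Elimination

variable {C : Type}

lemma mem_lowest {N : Type} [Fintype N] (s : List ℕ → ℕ → ℝ) (P : N → WeakOrder C)
    (A : Finset C) (c : C) : c ∈ lowest s P A ↔
      c ∈ A ∧ ∀ d ∈ A, totalScore s P A c ≤ totalScore s P A d := by
  unfold lowest
  rw [Finset.mem_filter]

/-- The profile in which the ballot `w i` is cast by `cnt i` voters. -/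
def prof {ι : Type} (cnt : ι → ℕ) (w : ι → WeakOrder C) : (Σ i : ι, Fin (cnt i)) → WeakOrder C :=
  fun p => w p.1

/-- Score of `a` in the weighted profile in which the ballot `w i` is cast by `cnt i` voters. -/
noncomputable def score {ι : Type} [Fintype ι] (s : List ℕ → ℕ → ℝ) (cnt : ι → ℕ)
    (w : ι → WeakOrder C) (A : Finset C) (a : C) : ℝ :=
  ∑ i, (cnt i : ℝ) * sc s (w i) A a

variable {ι : Type} [Fintype ι]

lemma totalScore_prof (s : List ℕ → ℕ → ℝ) (cnt : ι → ℕ) (w : ι → WeakOrder C) (A : Finset C)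
    (a : C) : totalScore s (prof cnt w) A a = score s cnt w A a := by
  unfold totalScore score
  rw [Fintype.sum_sigma]
  apply Finset.sum_congr rfl
  intro i _
  simp [prof, sc]

variable [DecidableEq C]

lemma winners_of_card_le_one {N : Type} [Fintype N] (s : List ℕ → ℕ → ℝ) (P : N → WeakOrder C)
    (A : Finset C) (h : A.card ≤ 1) : winners s P A = A := by
  unfold winners
  rcases Nat.eq_zero_or_pos A.card with h0 | h0
  · rw [h0]; rfl
  · have h1 : A.card = 0 + 1 := by omega
    rw [h1, winnersAux, if_pos h]

lemma winners_rec {N : Type} [Fintype N] (s : List ℕ → ℕ → ℝ) (P : N → WeakOrder C)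
    (A : Finset C) (h : 2 ≤ A.card) :
    winners s P A = (lowest s P A).biUnion fun c => winners s P (A.erase c) := by
  unfold winners
  obtain ⟨k, hk⟩ : ∃ k, A.card = k + 1 := ⟨A.card - 1, by omega⟩
  rw [hk, winnersAux, if_neg (by omega)]
  apply Finset.biUnion_congr rfl
  intro c hc
  rw [Finset.card_erase_of_mem ((mem_lowest s P A c).1 hc).1, hk]
  rfl

lemma winners_comp_equiv {N N' : Type} [Fintype N] [Fintype N'] (s : List ℕ → ℕ → ℝ)
    (P : N → WeakOrder C) (e : N' ≃ N) (A : Finset C) :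
    winners s (P ∘ e) A = winners s P A := by
  have hl : ∀ A : Finset C, lowest s (P ∘ e) A = lowest s P A := by
    intro A
    ext c
    have : ∀ d, totalScore s (P ∘ e) A d = totalScore s P A d := by
      intro d
      unfold totalScore
      exact Equiv.sum_comp e fun i => s ((P i).orderType A) ((P i).classIdx A d)
    simp only [mem_lowest, this]
  unfold winners
  generalize A.card = n
  induction n generalizing A with
  | zero => rfl
  | succ n ih =>
    simp only [winnersAux, hl, ih]

/-- Winners of the weighted profile in which the ballot `w i` is cast by `cnt i` voters. -/
noncomputable def W (s : List ℕ → ℕ → ℝ) (cnt : ι → ℕ)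
    (w : ι → WeakOrder C) (A : Finset C) : Finset C :=
  winners s (prof cnt w) A

lemma W_of_card_le_one (s : List ℕ → ℕ → ℝ) (cnt : ι → ℕ) (w : ι → WeakOrder C) (A : Finset C)
    (h : A.card ≤ 1) : W s cnt w A = A :=
  winners_of_card_le_one s _ A h

lemma mem_W_iff (s : List ℕ → ℕ → ℝ) (cnt : ι → ℕ) (w : ι → WeakOrder C) (A : Finset C)
    (h : 2 ≤ A.card) (x : C) : x ∈ W s cnt w A ↔
      ∃ c ∈ A, (∀ d ∈ A, score s cnt w A c ≤ score s cnt w A d) ∧ x ∈ W s cnt w (A.erase c) := by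
  unfold W
  rw [winners_rec s _ A h]
  simp only [Finset.mem_biUnion, mem_lowest, totalScore_prof, and_assoc]

lemma W_subset (s : List ℕ → ℕ → ℝ) (cnt : ι → ℕ) (w : ι → WeakOrder C) (A : Finset C) :
    W s cnt w A ⊆ A := by
  induction hn : A.card generalizing A with
  | zero => rw [W_of_card_le_one _ _ _ _ (by omega)]
  | succ n ih =>
    rcases Nat.eq_zero_or_pos n with h0 | h0
    · rw [W_of_card_le_one _ _ _ _ (by omega)]
    · intro x hx
      obtain ⟨c, hc, -, hx⟩ := (mem_W_iff s cnt w A (by omega) x).1 hx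
      have := ih (A.erase c) (by rw [Finset.card_erase_of_mem hc]; omega) hx
      exact Finset.mem_of_mem_erase this

lemma W_nonempty (s : List ℕ → ℕ → ℝ) (cnt : ι → ℕ) (w : ι → WeakOrder C) (A : Finset C)
    (hA : A.Nonempty) : (W s cnt w A).Nonempty := by
  induction hn : A.card generalizing A with
  | zero => rwa [W_of_card_le_one _ _ _ _ (by omega)]
  | succ n ih =>
    rcases Nat.eq_zero_or_pos n with h0 | h0
    · rwa [W_of_card_le_one _ _ _ _ (by omega)]
    · obtain ⟨c, hc, hmin⟩ := Finset.exists_min_image A (score s cnt w A) hA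
      have hce : (A.erase c).card = n := by rw [Finset.card_erase_of_mem hc]; omega
      obtain ⟨x, hx⟩ := ih (A.erase c) (Finset.card_pos.1 (by omega)) hce
      exact ⟨x, (mem_W_iff s cnt w A (by omega) x).2 ⟨c, hc, hmin, hx⟩⟩

lemma W_erase_of_lowest (s : List ℕ → ℕ → ℝ) (cnt : ι → ℕ) (w : ι → WeakOrder C) (A : Finset C)
    (h : 2 ≤ A.card) {c x : C} (hc : c ∈ A)
    (hmin : ∀ d ∈ A, d ≠ c → score s cnt w A c ≤ score s cnt w A d)
    (hx : x ∈ W s cnt w (A.erase c)) : x ∈ W s cnt w A :=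
  (mem_W_iff s cnt w A h x).2 ⟨c, hc, fun d hd => by
    by_cases hdc : d = c
    · rw [hdc]
    · exact hmin d hd hdc, hx⟩

lemma W_eq_of_unique_lowest (s : List ℕ → ℕ → ℝ) (cnt : ι → ℕ) (w : ι → WeakOrder C)
    (A : Finset C) (h : 2 ≤ A.card) {c : C} (hc : c ∈ A)
    (hmin : ∀ d ∈ A, d ≠ c → score s cnt w A c < score s cnt w A d) :
    W s cnt w A = W s cnt w (A.erase c) := by
  ext x
  constructor
  · intro hx
    obtain ⟨c', hc', hm, hx⟩ := (mem_W_iff s cnt w A h x).1 hx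
    by_cases hcc : c' = c
    · rwa [← hcc]
    · exact absurd (hm c hc) (not_le.2 (hmin c' hc' hcc))
  · exact W_erase_of_lowest s cnt w A h hc fun d hd hdc => (hmin d hd hdc).le

lemma not_mem_W_of_unique_lowest (s : List ℕ → ℕ → ℝ) (cnt : ι → ℕ) (w : ι → WeakOrder C)
    (A : Finset C) (h : 2 ≤ A.card) {c : C} (hc : c ∈ A)
    (hmin : ∀ d ∈ A, d ≠ c → score s cnt w A c < score s cnt w A d) : c ∉ W s cnt w A := by
  rw [W_eq_of_unique_lowest s cnt w A h hc hmin]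
  exact fun hx => Finset.notMem_erase _ _ (W_subset s cnt w _ hx)

end Elimination

/-! ### The axioms -/

/-- The hypotheses on the scoring system: nonnegativity, normalization, monotonicity, independence
of clones, and respect for cohesive majorities. -/
structure Good (s : List ℕ → ℕ → ℝ) : Prop where
  nn : NonnegSys s
  lz : LastZeroSys s
  mono : MonotoneSys s
  clones : ∀ (m n : ℕ) (P : Fin n → WeakOrder (Fin m))
        (A X : Finset (Fin m)), IsCloneSet P A X → ∀ xhat ∈ X,
      (∀ c ∈ A, c ∉ X →
        (c ∈ winners s P A ↔ c ∈ winners s P (A \ X.erase xhat))) ∧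
      (xhat ∈ winners s P (A \ X.erase xhat) ↔
        (X ∩ winners s P A).Nonempty)
  maj : ∀ (m n : ℕ) (P : Fin n → WeakOrder (Fin m))
        (A : Finset (Fin m)) (S : Finset (Fin n)),
      n < 2 * S.card →
      (∃ c ∈ A, ∀ i ∈ S, c ∈ (P i).topSet A) →
      winners s P A ⊆ S.biUnion fun i => (P i).topSet A

/-- `b` and `b'` are adjacent or tied in `w`, relative to `A`: every other candidate of `A`
compares to both in the same way. -/
def Twins {C : Type} (w : WeakOrder C) (A : Finset C) (b b' : C) : Prop :=
  ∀ c ∈ A, c ≠ b → c ≠ b' → (w.rel b c ↔ w.rel b' c) ∧ (w.rel c b ↔ w.rel c b')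

section Axioms

variable {s : List ℕ → ℕ → ℝ} {m : ℕ} {ι : Type} [Fintype ι]

lemma exists_fin_prof (s : List ℕ → ℕ → ℝ) (cnt : ι → ℕ) (w : ι → WeakOrder (Fin m)) :
    ∃ e : Fin (∑ i, cnt i) ≃ (Σ i : ι, Fin (cnt i)),
      ∀ A, winners s (prof cnt w ∘ e) A = W s cnt w A := by
  have hcard : Fintype.card (Σ i : ι, Fin (cnt i)) = ∑ i, cnt i := by
    rw [Fintype.card_sigma]; simp
  exact ⟨(Fintype.equivFinOfCardEq hcard).symm, fun A => winners_comp_equiv s _ _ A⟩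

lemma Good.clone_pair (hs : Good s) (cnt : ι → ℕ) (w : ι → WeakOrder (Fin m))
    (A : Finset (Fin m)) {b b' : Fin m} (hb : b ∈ A) (hb' : b' ∈ A) (hbb : b ≠ b')
    (h : ∀ i, Twins (w i) A b b') :
    (∀ c ∈ A, c ≠ b → c ≠ b' → (c ∈ W s cnt w A ↔ c ∈ W s cnt w (A.erase b'))) ∧
    (b ∈ W s cnt w (A.erase b') ↔ b ∈ W s cnt w A ∨ b' ∈ W s cnt w A) := by
  obtain ⟨e, he⟩ := exists_fin_prof s cnt w
  have hclone : IsCloneSet (prof cnt w ∘ e) A {b, b'} := by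
    constructor
    · intro x hx
      simp only [Finset.mem_insert, Finset.mem_singleton] at hx
      rcases hx with rfl | rfl <;> assumption
    · intro i c hc hcX
      simp only [Finset.mem_insert, Finset.mem_singleton, not_or] at hcX
      have h1 := h (e i).1 c hc hcX.1 hcX.2
      have h2 := (w (e i).1).total b c
      simp only [Finset.mem_insert, Finset.mem_singleton, forall_eq_or_imp, forall_eq,
        Function.comp, prof, WeakOrder.strict, WeakOrder.indiff]
      tauto
  have hX : A \ ({b, b'} : Finset (Fin m)).erase b = A.erase b' := by
    ext x
    simp only [Finset.mem_sdiff, Finset.mem_erase, Finset.mem_insert, Finset.mem_singleton]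
    constructor
    · rintro ⟨h1, h2⟩
      exact ⟨fun h => h2 ⟨by rw [h]; exact hbb.symm, Or.inr h⟩, h1⟩
    · rintro ⟨h1, h2⟩
      exact ⟨h2, by tauto⟩
  have key := hs.clones m _ (prof cnt w ∘ e) A {b, b'} hclone b (by simp)
  rw [hX, he, he] at key
  refine ⟨fun c hc h1 h2 => key.1 c hc (by simp [h1, h2]), key.2.trans ?_⟩
  constructor
  · rintro ⟨x, hx⟩
    simp only [Finset.mem_inter, Finset.mem_insert, Finset.mem_singleton] at hx
    rcases hx with ⟨rfl | rfl, hx⟩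
    · exact Or.inl hx
    · exact Or.inr hx
  · rintro (hx | hx)
    · exact ⟨b, by simp [hx]⟩
    · exact ⟨b', by simp [hx]⟩

/-- Respect for cohesive majorities, for a weighted profile and a majority made of whole blocks. -/
lemma Good.cohesive (hs : Good s) (cnt : ι → ℕ) (w : ι → WeakOrder (Fin m))
    (A : Finset (Fin m)) (J : Finset ι) (hJ : ∑ i, cnt i < 2 * ∑ i ∈ J, cnt i) {a d : Fin m}
    (ha : a ∈ A) (htop : ∀ i ∈ J, ∀ x ∈ A, (w i).rel a x) (hd : d ∈ W s cnt w A) :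
    ∃ i ∈ J, ∀ x ∈ A, (w i).rel d x := by
  obtain ⟨e, he⟩ := exists_fin_prof s cnt w
  have hcard : (Finset.univ.filter fun k => (e k).1 ∈ J).card = ∑ i ∈ J, cnt i := by
    have h1 : (Finset.univ.filter fun k => (e k).1 ∈ J).card =
        (J.sigma fun i => (Finset.univ : Finset (Fin (cnt i)))).card := by
      apply Finset.card_bij (fun k _ => e k)
      · intro k hk
        simpa using hk
      · intro k _ k' _ hkk
        exact e.injective hkk
      · intro p hp
        refine ⟨e.symm p, ?_, by simp⟩
        simpa using hp
    rw [h1, Finset.card_sigma]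
    simp
  have key := hs.maj m _ (prof cnt w ∘ e) A (Finset.univ.filter fun k => (e k).1 ∈ J)
    (by rw [hcard]; exact hJ) ⟨a, ha, ?_⟩
  · rw [he] at key
    have := key hd
    simp only [Finset.mem_biUnion, Finset.mem_filter, Finset.mem_univ, true_and] at this
    obtain ⟨k, hk, hkd⟩ := this
    refine ⟨(e k).1, hk, ?_⟩
    exact ((mem_topSet _ _ _).1 hkd).2
  · intro k hk
    rw [Finset.mem_filter] at hk
    exact (mem_topSet _ _ _).2 ⟨ha, htop _ hk.2⟩

/-- A strict majority putting `d` alone on top elects `d`. -/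
lemma Good.majority (hs : Good s) (cnt : ι → ℕ) (w : ι → WeakOrder (Fin m))
    (A : Finset (Fin m)) (J : Finset ι) (hJ : ∑ i, cnt i < 2 * ∑ i ∈ J, cnt i) {d : Fin m}
    (hd : d ∈ A) (htop : ∀ i ∈ J, ∀ x ∈ A, x ≠ d → (w i).strict d x) : W s cnt w A = {d} := by
  have hrel : ∀ i ∈ J, ∀ x ∈ A, (w i).rel d x := by
    intro i hi x hx
    by_cases hxd : x = d
    · rw [hxd]; exact ((w i).total d d).elim id id
    · exact (htop i hi x hx hxd).1
  have hsub : ∀ y ∈ W s cnt w A, y = d := by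
    intro y hy
    by_contra hyd
    obtain ⟨i, hi, h⟩ := hs.cohesive cnt w A J hJ hd hrel hy
    exact (htop i hi y (W_subset s cnt w A hy) hyd).2 (h d hd)
  obtain ⟨y, hy⟩ := W_nonempty s cnt w A ⟨d, hd⟩
  ext x
  rw [Finset.mem_singleton]
  exact ⟨hsub x, fun h => by rw [h, ← hsub y hy]; exact hy⟩

end Axioms

/-! ### Sizes at which the scoring system is a multiple of the approval scoring system -/

/-- On order types of `M` candidates, `s` is a positive multiple of `(1, 0, …, 0)`. -/
def App (s : List ℕ → ℕ → ℝ) (M : ℕ) : Prop :=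
  ∃ lam : ℝ, 0 < lam ∧ ∀ τ : List ℕ, τ.sum = M → (∀ x ∈ τ, 0 < x) → 2 ≤ τ.length →
    s τ 0 = lam ∧ ∀ j, 1 ≤ j → j < τ.length → s τ j = 0

/-- The number of ballots of the weighted profile that rank `x` on top within `A`. -/
noncomputable def appr {C ι : Type} [Fintype ι] (cnt : ι → ℕ) (w : ι → WeakOrder C)
    (A : Finset C) (x : C) : ℕ :=
  ∑ i, if ∀ y ∈ A, (w i).rel x y then cnt i else 0

section Approval

variable {C ι : Type} [Fintype ι] {s : List ℕ → ℕ → ℝ}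

lemma App.score_sub {A : Finset C} (h : App s A.card) (cnt : ι → ℕ) (w : ι → WeakOrder C) :
    ∃ lam : ℝ, 0 < lam ∧ ∀ x ∈ A, ∀ y ∈ A, score s cnt w A x - score s cnt w A y =
      lam * ((appr cnt w A x : ℝ) - appr cnt w A y) := by
  obtain ⟨lam, hl, h⟩ := h
  refine ⟨lam, hl, ?_⟩
  have key : ∀ v : WeakOrder C, ∀ x ∈ A, ∀ y ∈ A, sc s v A x - sc s v A y =
      lam * ((if ∀ z ∈ A, v.rel x z then (1 : ℝ) else 0) -
        (if ∀ z ∈ A, v.rel y z then (1 : ℝ) else 0)) := by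
    intro v x hx y hy
    have hz : ∀ z ∈ A, (v.classIdx A z = 0 ↔ ∀ u ∈ A, v.rel z u) := by
      intro z hz
      rw [classIdx_eq_zero_iff v A hz, mem_topSet]
      exact and_iff_right hz
    by_cases hn : 2 ≤ v.numClasses A
    · have hsc : ∀ z ∈ A, sc s v A z = lam * (if ∀ u ∈ A, v.rel z u then (1 : ℝ) else 0) := by
        intro z hzA
        have h1 := h _ (sum_orderType v A) (orderType_pos v A) (by rwa [length_orderType])
        unfold sc
        by_cases h0 : v.classIdx A z = 0
        · rw [if_pos ((hz z hzA).1 h0), h0, h1.1, mul_one]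
        · rw [if_neg (fun hc => h0 ((hz z hzA).2 hc)), mul_zero]
          apply h1.2 _ (by omega)
          rw [length_orderType]
          exact classIdx_lt_numClasses v A hzA
      rw [hsc x hx, hsc y hy]; ring
    · have h0 : ∀ z ∈ A, v.classIdx A z = 0 := by
        intro z hzA
        have := classIdx_lt_numClasses v A hzA
        omega
      rw [if_pos ((hz x hx).1 (h0 x hx)), if_pos ((hz y hy).1 (h0 y hy))]
      unfold sc
      rw [h0 x hx, h0 y hy]; ring
  intro x hx y hy
  unfold score appr
  push_cast
  rw [← Finset.sum_sub_distrib, ← Finset.sum_sub_distrib, Finset.mul_sum]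
  apply Finset.sum_congr rfl
  intro i _
  rw [← mul_sub, key (w i) x hx y hy]
  split_ifs <;> ring

lemma App.score_le_iff {A : Finset C} (h : App s A.card) (cnt : ι → ℕ) (w : ι → WeakOrder C)
    {x y : C} (hx : x ∈ A) (hy : y ∈ A) :
    score s cnt w A x ≤ score s cnt w A y ↔ appr cnt w A x ≤ appr cnt w A y := by
  obtain ⟨lam, hl, h⟩ := h.score_sub cnt w
  have h1 := h y hy x hx
  rw [← sub_nonneg, h1, mul_nonneg_iff_of_pos_left hl, sub_nonneg, Nat.cast_le]

lemma App.score_lt_iff {A : Finset C} (h : App s A.card) (cnt : ι → ℕ) (w : ι → WeakOrder C)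
    {x y : C} (hx : x ∈ A) (hy : y ∈ A) :
    score s cnt w A x < score s cnt w A y ↔ appr cnt w A x < appr cnt w A y := by
  rw [← not_le, ← not_le, h.score_le_iff cnt w hy hx]

variable [DecidableEq C]

/-- While `s` is approval-like, `c` wins if the voters not putting `c` alone on top are
outnumbered by those putting `c` (possibly tied) on top. -/
lemma app_wins (cnt : ι → ℕ) (w : ι → WeakOrder C) (A : Finset C) (hA : ∀ k ≤ A.card, App s k)
    {c : C} (hc : c ∈ A) (I J : Finset ι) (hI : ∀ i ∈ I, ∀ x ∈ A, (w i).rel c x)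
    (hJ : ∀ i ∈ J, ∀ x ∈ A, x ≠ c → (w i).strict c x)
    (hlt : ∑ i, cnt i < ∑ i ∈ I, cnt i + ∑ i ∈ J, cnt i) : W s cnt w A = {c} := by
  have hJc := Finset.sum_add_sum_compl J cnt
  have hsub : ∀ x ∈ W s cnt w A, x = c := by
    induction hn : A.card generalizing A with
    | zero => simp [Finset.card_eq_zero.1 hn] at hc
    | succ n ih =>
      intro x hx
      rcases Nat.eq_zero_or_pos n with h0 | h0
      · rw [W_of_card_le_one _ _ _ _ (by omega)] at hx
        exact Finset.card_le_one.1 (by omega) x hx c hc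
      · obtain ⟨d, hd, hmin, hx⟩ := (mem_W_iff s cnt w A (by omega) x).1 hx
        have hdc : d ≠ c := by
          rintro rfl
          obtain ⟨y, hy, hyd⟩ := Finset.exists_mem_ne (show 1 < A.card by omega) d
          have h1 := ((hA _ le_rfl).score_le_iff cnt w hd hy).1 (hmin y hy)
          have h2 : appr cnt w A y ≤ ∑ i ∈ Jᶜ, cnt i := by
            unfold appr
            rw [← Finset.sum_filter]
            apply Finset.sum_le_sum_of_subset
            intro i hi
            rw [Finset.mem_compl]
            intro hiJ
            exact (hJ i hiJ y hy hyd).2 ((Finset.mem_filter.1 hi).2 d hd)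
          have h3 : ∑ i ∈ I, cnt i ≤ appr cnt w A d := by
            unfold appr
            rw [← Finset.sum_filter]
            apply Finset.sum_le_sum_of_subset
            intro i hi
            exact Finset.mem_filter.2 ⟨Finset.mem_univ _, hI i hi⟩
          omega
        have hcard : (A.erase d).card = n := by rw [Finset.card_erase_of_mem hd]; omega
        refine ih (A.erase d) (fun k hk => hA k (by omega))
          (Finset.mem_erase.2 ⟨hdc.symm, hc⟩)
          (fun i hi y hy => hI i hi y (Finset.mem_of_mem_erase hy))
          (fun i hi y hy => hJ i hi y (Finset.mem_of_mem_erase hy)) hcard x hx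
  obtain ⟨y, hy⟩ := W_nonempty s cnt w A ⟨c, hc⟩
  ext x
  rw [Finset.mem_singleton]
  exact ⟨hsub x, fun h => by rw [h, ← hsub y hy]; exact hy⟩

lemma W_congr_app (s' : List ℕ → ℕ → ℝ) (h : ∀ k, App s k) (h' : ∀ k, App s' k)
    (cnt : ι → ℕ) (w : ι → WeakOrder C) (A : Finset C) : W s cnt w A = W s' cnt w A := by
  induction hn : A.card generalizing A with
  | zero => rw [W_of_card_le_one _ _ _ _ (by omega), W_of_card_le_one _ _ _ _ (by omega)]
  | succ n ih =>
    rcases Nat.eq_zero_or_pos n with h0 | h0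
    · rw [W_of_card_le_one _ _ _ _ (by omega), W_of_card_le_one _ _ _ _ (by omega)]
    · ext x
      rw [mem_W_iff _ _ _ _ (by omega), mem_W_iff _ _ _ _ (by omega)]
      refine exists_congr fun c => and_congr_right fun hc => ?_
      rw [ih (A.erase c) (by rw [Finset.card_erase_of_mem hc]; omega)]
      apply and_congr_left fun _ => ?_
      refine forall_congr' fun d => forall_congr' fun hd => ?_
      rw [(h _).score_le_iff cnt w hc hd, (h' _).score_le_iff cnt w hc hd]

lemma winners_eq_W {N : Type} [Fintype N] (s : List ℕ → ℕ → ℝ) (P : N → WeakOrder C)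
    (A : Finset C) : winners s P A = W s (fun _ => 1) P A := by
  unfold W
  exact (winners_comp_equiv s P (Equiv.sigmaUnique N fun _ => Fin 1) A).symm

end Approval

lemma app_approvalScoring (k : ℕ) : App approvalScoring k := by
  refine ⟨1, one_pos, fun τ _ _ hl => ⟨?_, fun j hj _ => ?_⟩⟩
  · simp [approvalScoring, hl]
  · have : j ≠ 0 := by omega
    simp [approvalScoring, this]

lemma app_zero (s : List ℕ → ℕ → ℝ) : App s 0 := by
  refine ⟨1, one_pos, fun τ h0 hp hl => ?_⟩
  rcases τ with _ | ⟨x, τ⟩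
  · simp at hl
  · have := hp x (by simp)
    simp at h0
    omega

lemma app_one (s : List ℕ → ℕ → ℝ) : App s 1 := by
  refine ⟨1, one_pos, fun τ h0 hp hl => ?_⟩
  rcases τ with _ | ⟨x, _ | ⟨y, τ⟩⟩
  · simp at hl
  · simp at hl
  · have h1 := hp x (by simp)
    have h2 := hp y (by simp)
    simp at h0
    omega

/-! ### Basic ballots on `Fin m` and their scores -/

/-- The ballot `d ≻ everyone else`. -/
def bTop {m : ℕ} (d : Fin m) : WeakOrder (Fin m) := ofRank fun x => if x = d then 0 else 1

/-- The ballot `everyone else ≻ d`. -/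
def bBot {m : ℕ} (d : Fin m) : WeakOrder (Fin m) := ofRank fun x => if x = d then 1 else 0

/-- The ballot `a ≻ c ≻ everyone else`. -/
def bTwo {m : ℕ} (a c : Fin m) : WeakOrder (Fin m) :=
  ofRank fun x => if x = a then 0 else if x = c then 1 else 2

/-- The ballot `d ≻ everyone else ≻ x`. -/
def bMid {m : ℕ} (d x : Fin m) : WeakOrder (Fin m) :=
  ofRank fun y => if y = d then 0 else if y = x then 2 else 1

section Ballots

variable {s : List ℕ → ℕ → ℝ} {m : ℕ}

lemma card_filter_ne (d : Fin m) : (univ.filter fun x : Fin m => x ≠ d).card = m - 1 := by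
  rw [Finset.filter_ne' univ d, Finset.card_erase_of_mem (Finset.mem_univ d)]
  simp

lemma card_filter_eq (d : Fin m) : (univ.filter fun x : Fin m => x = d).card = 1 := by
  rw [Finset.card_eq_one]
  exact ⟨d, by ext x; simp⟩

lemma card_filter_ne_ne {a c : Fin m} (h : a ≠ c) :
    (univ.filter fun x : Fin m => x ≠ a ∧ x ≠ c).card = m - 2 := by
  have : (univ.filter fun x : Fin m => x ≠ a ∧ x ≠ c) = (univ.erase a).erase c := by
    ext x; simp [and_comm]
  rw [this, Finset.card_erase_of_mem (by simp [h.symm]), Finset.card_erase_of_mem (by simp)]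
  simp
  omega

lemma sc_mono (hs : Good s) {C : Type} (v : WeakOrder C) (A : Finset C) {x y : C}
    (h : v.rel x y) : sc s v A y ≤ sc s v A x :=
  hs.mono _ _ _ (classIdx_le_of_rel v A h)

lemma sc_nonneg (hs : Good s) {C : Type} (v : WeakOrder C) (A : Finset C) (x : C) :
    0 ≤ sc s v A x :=
  hs.nn _ _

lemma Good.last (hs : Good s) (L : List ℕ) (k : ℕ) (h : L.length = k + 1) : s L k = 0 := by
  have := hs.lz L (by rintro rfl; simp at h)
  rwa [h] at this

lemma sc_bTop (hs : Good s) (hm : 2 ≤ m) (d x : Fin m) :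
    sc s (bTop d) univ x = if x = d then s [1, m - 1] 0 else 0 := by
  have h := sc_eq s (bTop d) univ (fun x => if x = d then 0 else 1) [1, m - 1]
    (fun _ _ _ _ => Iff.rfl) (by intro x _; dsimp; split_ifs <;> simp) ?_
    (by simp; omega) (Finset.mem_univ x)
  · rw [h]
    split_ifs
    · rfl
    · exact hs.last _ _ rfl
  · intro j hj
    have hj : j < 2 := hj
    interval_cases j
    · simpa using card_filter_eq d
    · simpa using card_filter_ne d

lemma sc_bBot (hs : Good s) (hm : 2 ≤ m) (d x : Fin m) :
    sc s (bBot d) univ x = if x = d then 0 else s [m - 1, 1] 0 := by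
  have h := sc_eq s (bBot d) univ (fun x => if x = d then 1 else 0) [m - 1, 1]
    (fun _ _ _ _ => Iff.rfl) (by intro x _; dsimp; split_ifs <;> simp) ?_
    (by simp; omega) (Finset.mem_univ x)
  · rw [h]
    split_ifs
    · exact hs.last _ _ rfl
    · rfl
  · intro j hj
    have hj : j < 2 := hj
    interval_cases j
    · simpa using card_filter_ne d
    · simpa using card_filter_eq d

lemma sc_bTwo (hs : Good s) (hm : 3 ≤ m) {a c : Fin m} (hac : a ≠ c) (x : Fin m) :
    sc s (bTwo a c) univ x = if x = a then s [1, 1, m - 2] 0 else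
      if x = c then s [1, 1, m - 2] 1 else 0 := by
  have h := sc_eq s (bTwo a c) univ (fun x => if x = a then 0 else if x = c then 1 else 2)
    [1, 1, m - 2]
    (fun _ _ _ _ => Iff.rfl) (by intro x _; dsimp; split_ifs <;> simp) ?_
    (by simp; omega) (Finset.mem_univ x)
  · rw [h]
    split_ifs
    · rfl
    · rfl
    · exact hs.last _ _ rfl
  · intro j hj
    have hj : j < 3 := hj
    interval_cases j
    · refine Eq.trans ?_ (card_filter_eq a)
      congr 1; ext x
      simp only [Finset.mem_filter]
      split_ifs <;> simp_all
    · refine Eq.trans ?_ (card_filter_eq c)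
      congr 1; ext x
      simp only [Finset.mem_filter]
      split_ifs <;> simp_all
    · refine Eq.trans ?_ (card_filter_ne_ne hac)
      congr 1; ext x
      simp only [Finset.mem_filter]
      split_ifs <;> simp_all

lemma sc_bMid (hs : Good s) (hm : 3 ≤ m) {d x : Fin m} (hac : d ≠ x) (y : Fin m) :
    sc s (bMid d x) univ y = if y = d then s [1, m - 2, 1] 0 else
      if y = x then 0 else s [1, m - 2, 1] 1 := by
  have h := sc_eq s (bMid d x) univ (fun y => if y = d then 0 else if y = x then 2 else 1)
    [1, m - 2, 1]
    (fun _ _ _ _ => Iff.rfl) (by intro x _; dsimp; split_ifs <;> simp) ?_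
    (by simp; omega) (Finset.mem_univ y)
  · rw [h]
    split_ifs
    · rfl
    · exact hs.last _ _ rfl
    · rfl
  · intro j hj
    have hj : j < 3 := hj
    interval_cases j
    · refine Eq.trans ?_ (card_filter_eq d)
      congr 1; ext x
      simp only [Finset.mem_filter]
      split_ifs <;> simp_all
    · refine Eq.trans ?_ (card_filter_ne_ne hac)
      congr 1; ext x
      simp only [Finset.mem_filter]
      split_ifs <;> simp_all
    · refine Eq.trans ?_ (card_filter_eq x)
      congr 1; ext x
      simp only [Finset.mem_filter]
      split_ifs <;> simp_all

/-- A ballot's unique top candidate has positive score: otherwise every candidate ties, so this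
candidate could be eliminated although it is the favourite of the single voter. -/
lemma Good.sc_top_pos (hs : Good s) (hm : 2 ≤ m) (v : WeakOrder (Fin m)) (a : Fin m)
    (ha : ∀ x, x ≠ a → v.strict a x) : 0 < sc s v univ a := by
  by_contra hneg
  have h0 : ∀ x, sc s v univ x = 0 := by
    intro x
    apply le_antisymm _ (sc_nonneg hs v _ x)
    refine le_trans ?_ (not_lt.1 hneg)
    by_cases hx : x = a
    · rw [hx]
    · exact sc_mono hs v _ (ha x hx).1
  have hW := hs.majority (fun _ : Unit => 1) (fun _ => v) univ univ (by simp) (Finset.mem_univ a)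
    (fun i _ x _ hx => ha x hx)
  have hcard : (univ : Finset (Fin m)).card = m := by simp
  obtain ⟨y, hy⟩ := W_nonempty s (fun _ : Unit => 1) (fun _ => v)
    ((univ : Finset (Fin m)).erase a) (Finset.card_pos.1 (by
      rw [Finset.card_erase_of_mem (Finset.mem_univ a)]; omega))
  have hya := Finset.ne_of_mem_erase (W_subset _ _ _ _ hy)
  have := W_erase_of_lowest s (fun _ : Unit => 1) (fun _ => v) univ (by omega)
    (Finset.mem_univ a) (fun d _ _ => by simp [score, h0]) hy
  rw [hW, Finset.mem_singleton] at this
  exact hya this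

lemma bTop_strict {d x : Fin m} (h : x ≠ d) : (bTop d).strict d x := by
  unfold bTop; rw [ofRank_strict]; simp [h]

lemma bTwo_strict {a x : Fin m} (c : Fin m) (h : x ≠ a) : (bTwo a c).strict a x := by
  unfold bTwo; rw [ofRank_strict]; simp [h]; split_ifs <;> omega

lemma bMid_strict {d y : Fin m} (x : Fin m) (h : y ≠ d) : (bMid d x).strict d y := by
  unfold bMid; rw [ofRank_strict]; simp [h]; split_ifs <;> omega

lemma bBot_strict {d x : Fin m} (h : x ≠ d) : (bBot d).strict x d := by
  unfold bBot; rw [ofRank_strict]; simp [h]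

lemma Good.top_pos (hs : Good s) (hm : 2 ≤ m) : 0 < s [1, m - 1] 0 := by
  have := hs.sc_top_pos hm (bTop ⟨0, by omega⟩) ⟨0, by omega⟩ fun x hx => bTop_strict hx
  rwa [sc_bTop hs hm, if_pos rfl] at this

lemma Good.two_pos (hs : Good s) (hm : 3 ≤ m) : 0 < s [1, 1, m - 2] 0 := by
  have := hs.sc_top_pos (by omega) (bTwo (⟨0, by omega⟩ : Fin m) ⟨1, by omega⟩) ⟨0, by omega⟩
    fun x hx => bTwo_strict _ hx
  rwa [sc_bTwo hs hm (by simp), if_pos rfl] at this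

lemma Good.app_two (hs : Good s) : App s 2 := by
  refine ⟨s [1, 1] 0, hs.top_pos le_rfl, fun τ h0 hp hl => ?_⟩
  rcases τ with _ | ⟨x, _ | ⟨y, _ | ⟨z, τ⟩⟩⟩
  · simp at hl
  · simp at hl
  · have h1 := hp x (by simp)
    have h2 := hp y (by simp)
    simp at h0
    obtain ⟨rfl, rfl⟩ : x = 1 ∧ y = 1 := by omega
    refine ⟨rfl, fun j hj hj2 => ?_⟩
    have hj2 : j < 2 := hj2
    obtain rfl : j = 1 := by omega
    exact hs.last _ _ rfl
  · have h1 := hp x (by simp)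
    have h2 := hp y (by simp)
    have h3 := hp z (by simp)
    simp at h0
    omega

end Ballots

/-! ### Lifting from two candidates -/

section Lift

variable {s : List ℕ → ℕ → ℝ} {m : ℕ} {ι : Type} [Fintype ι]

/-- If every voter ranks `d` strictly first or strictly last, all other candidates are clones. -/
lemma Good.clone_rest (hs : Good s) (cnt : ι → ℕ) (w : ι → WeakOrder (Fin m)) {d x : Fin m}
    (hx : x ≠ d) (h : ∀ i, (∀ y, y ≠ d → (w i).strict d y) ∨ (∀ y, y ≠ d → (w i).strict y d)) :
    d ∈ W s cnt w univ ↔ d ∈ W s cnt w {d, x} := by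
  obtain ⟨e, he⟩ := exists_fin_prof s cnt w
  have hclone : IsCloneSet (prof cnt w ∘ e) univ (univ.erase d) := by
    refine ⟨Finset.subset_univ _, fun i c _ hc => ?_⟩
    have hc : c = d := by simpa using hc
    subst hc
    rcases h (e i).1 with h | h
    · exact Or.inr (Or.inr fun y hy => h y (Finset.ne_of_mem_erase hy))
    · exact Or.inl fun y hy => h y (Finset.ne_of_mem_erase hy)
  have hX : univ \ ((univ : Finset (Fin m)).erase d).erase x = {d, x} := by
    ext y
    simp only [Finset.mem_sdiff, Finset.mem_erase, Finset.mem_insert, Finset.mem_singleton,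
      Finset.mem_univ, true_and]
    tauto
  have key := hs.clones m _ (prof cnt w ∘ e) univ (univ.erase d) hclone x (by simp [hx])
  rw [hX, he, he] at key
  exact key.1 d (Finset.mem_univ d) (by simp)

/-- For ballots `w i` with unique top candidate `d`, some other candidate `y` would tie with or
be below `d` after adding as many ballots with `d` alone at the bottom; for otherwise `d` would be
eliminated at once, although `d` ties once the remaining candidates are contracted to one. -/
lemma Good.lift_two (hs : Good s) (hm : 2 ≤ m) (w : ι → WeakOrder (Fin m)) (d : Fin m)
    (h : ∀ i y, y ≠ d → (w i).strict d y) :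
    ∃ y, y ≠ d ∧ ∑ i, sc s (w i) univ y + Fintype.card ι * s [m - 1, 1] 0 ≤
      ∑ i, sc s (w i) univ d := by
  by_contra hcon
  push Not at hcon
  set cnt : Option ι → ℕ := fun o => o.elim (Fintype.card ι) fun _ => 1 with hcnt
  set v : Option ι → WeakOrder (Fin m) := fun o => o.elim (bBot d) w with hv
  have hcard : (univ : Finset (Fin m)).card = m := by simp
  obtain ⟨x, -, hx⟩ := Finset.exists_mem_ne (s := (univ : Finset (Fin m))) (by omega) d
  have hnot : d ∉ W s cnt v univ := by
    apply not_mem_W_of_unique_lowest s cnt v univ (by omega) (Finset.mem_univ d)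
    intro y _ hy
    have := hcon y hy
    simp only [score, Fintype.sum_option, hcnt, hv, Option.elim, sc_bBot hs hm, if_neg hy]
    simp
    linarith
  rw [hs.clone_rest cnt v hx] at hnot
  · apply hnot
    have hc2 : ({d, x} : Finset (Fin m)).card = 2 := Finset.card_pair hx.symm
    have hapd : appr cnt v {d, x} d = appr cnt v {d, x} x := by
      have h1 : ∀ i, (w i).rel d d := fun i => ((w i).total d d).elim id id
      have h2 : ∀ i, (w i).rel d x := fun i => (h i x hx).1
      have h3 : ∀ i, ¬ (w i).rel x d := fun i => (h i x hx).2
      have h4 := bBot_strict hx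
      have h5 : (bBot d).rel x x := le_refl _
      simp [appr, Fintype.sum_option, hcnt, hv, h1, h2, h3, h4.1, h4.2, h5]
    refine W_erase_of_lowest s cnt v {d, x} (by omega) (c := x) (by simp) ?_ ?_
    · intro y hy hyx
      have : y = d := by simpa [hyx] using hy
      subst this
      rw [App.score_le_iff (by rw [hc2]; exact hs.app_two) cnt v (by simp) (by simp), hapd]
    · have : ({d, x} : Finset (Fin m)).erase x = {d} := by
        ext y
        simp only [Finset.mem_erase, Finset.mem_insert, Finset.mem_singleton]
        constructor
        · tauto
        · rintro rfl; exact ⟨hx.symm, Or.inl rfl⟩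
      rw [this, W_of_card_le_one _ _ _ _ (by simp)]
      simp
  · rintro (_ | i)
    · exact Or.inr fun y hy => bBot_strict hy
    · exact Or.inl fun y hy => h i y hy

/-- `K * q` eventually outgrows `u + K * p` when `p < q`. -/
lemma eventually_lin (u p q : ℝ) (h : p < q) : ∀ᶠ K : ℕ in Filter.atTop, u + K * p ≤ K * q := by
  filter_upwards [Filter.eventually_ge_atTop ⌈u / (q - p)⌉₊] with K hK
  have h1 : u / (q - p) ≤ K := Nat.ceil_le.1 hK
  rw [div_le_iff₀ (by linarith)] at h1
  linarith

/-- The cohesive-majority obstruction. With one ballot `a ≻ d ≻ rest`, many ballots putting `d`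
alone last, and equally many ballots with `d` alone first, candidate `a` must not be eliminated
first: `d` would then win by majority, while the cohesive majority around `a` forbids it. -/
lemma Good.cohesive_obstruction (hs : Good s) (hm : 3 ≤ m) (w : ι → WeakOrder (Fin m))
    (a d : Fin m) (had : a ≠ d) (h : ∀ i y, y ≠ d → (w i).strict d y)
    (hy : ∀ y, y ≠ a → y ≠ d → ∑ i, sc s (w i) univ a < ∑ i, sc s (w i) univ y)
    (hd : Fintype.card ι * s [m - 1, 1] 0 + ∑ i, sc s (w i) univ a < ∑ i, sc s (w i) univ d) :
    False := by
  have hev : ∀ y, y ≠ a → y ≠ d → ∀ᶠ K : ℕ in Filter.atTop,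
      s [1, 1, m - 2] 0 + K * ∑ i, sc s (w i) univ a ≤ K * ∑ i, sc s (w i) univ y :=
    fun y h1 h2 => eventually_lin _ _ _ (hy y h1 h2)
  have hev' : ∀ᶠ K : ℕ in Filter.atTop, ∀ y, y ≠ a → y ≠ d →
      s [1, 1, m - 2] 0 + K * ∑ i, sc s (w i) univ a ≤ K * ∑ i, sc s (w i) univ y := by
    rw [Filter.eventually_all]
    intro y
    by_cases h1 : y = a
    · exact Filter.Eventually.of_forall fun K h2 => absurd h1 h2
    by_cases h2 : y = d
    · exact Filter.Eventually.of_forall fun K _ h3 => absurd h2 h3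
    filter_upwards [hev y h1 h2] with K hK _ _ using hK
  obtain ⟨K, hK1, hK2⟩ := (hev'.and (eventually_lin (s [1, 1, m - 2] 0) _ _ hd)).exists
  set cnt : Option (Option ι) → ℕ :=
    fun o => o.elim 1 fun o => o.elim (K * Fintype.card ι) fun _ => K with hcnt
  set v : Option (Option ι) → WeakOrder (Fin m) :=
    fun o => o.elim (bTwo a d) fun o => o.elim (bBot d) w with hv
  have hcard : (univ : Finset (Fin m)).card = m := by simp
  have hsc : ∀ y, score s cnt v univ y = sc s (bTwo a d) univ y +
      ((K * Fintype.card ι : ℝ) * sc s (bBot d) univ y + K * ∑ i, sc s (w i) univ y) := by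
    intro y
    simp [score, Fintype.sum_option, hcnt, hv, Finset.mul_sum]
  have htot : ∑ i, cnt i = 1 + (K * Fintype.card ι + K * Fintype.card ι) := by
    simp [Fintype.sum_option, hcnt, mul_comm]
  have hWd : W s cnt v (univ.erase a) = {d} := by
    apply hs.majority cnt v (univ.erase a) (univ.erase (some none)) _ (by simp [had.symm])
    · intro i hi x hx hxd
      rcases i with _ | _ | i
      · have := Finset.ne_of_mem_erase hx
        show (bTwo a d).strict d x
        unfold bTwo; rw [ofRank_strict]
        simp [this, hxd, had.symm]
      · simp at hi
      · exact h i x hxd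
    · have := Finset.add_sum_erase univ cnt (Finset.mem_univ (some none))
      have h2 : cnt (some none) = K * Fintype.card ι := rfl
      omega
  have hdW : d ∈ W s cnt v univ := by
    refine W_erase_of_lowest s cnt v univ (by omega) (Finset.mem_univ a) ?_
      (by rw [hWd]; simp)
    intro y _ hya
    rw [hsc, hsc, sc_bBot hs (by omega), sc_bBot hs (by omega), if_neg had,
      sc_bTwo hs hm had, if_pos rfl]
    have hnn := sc_nonneg hs (bTwo a d) univ y
    by_cases hyd : y = d
    · subst hyd
      rw [if_pos rfl]
      nlinarith
    · rw [if_neg hyd]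
      have := hK1 y hya hyd
      linarith
  obtain ⟨i, hi, hi2⟩ := hs.cohesive cnt v univ {none, some none}
    (by rw [htot, Finset.sum_pair (by simp)]; simp [hcnt]; omega) (Finset.mem_univ a) (by
      intro i hi x _
      simp only [Finset.mem_insert, Finset.mem_singleton] at hi
      rcases hi with rfl | rfl
      · show (ofRank _).rel a x
        simp [ofRank]
      · show (ofRank _).rel a x
        simp [ofRank, had]) hdW
  have := hi2 a (Finset.mem_univ a)
  simp only [Finset.mem_insert, Finset.mem_singleton] at hi
  rcases hi with rfl | rfl
  · exact (bTwo_strict d had.symm).2 this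
  · exact (bBot_strict had).2 this

lemma Good.top_ge (hs : Good s) (hm : 2 ≤ m) : s [m - 1, 1] 0 ≤ s [1, m - 1] 0 := by
  obtain ⟨y, hy, h⟩ := hs.lift_two hm (fun _ : Unit => bTop ⟨0, by omega⟩) ⟨0, by omega⟩
    fun _ y hy => bTop_strict hy
  simpa [sc_bTop hs hm, hy] using h

lemma Good.two_ge' (hs : Good s) (hm : 3 ≤ m) :
    s [1, 1, m - 2] 1 + (m - 1) * s [m - 1, 1] 0 ≤ (m - 1) * s [1, 1, m - 2] 0 := by
  set d : Fin m := ⟨0, by omega⟩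
  obtain ⟨y, hy, h⟩ := hs.lift_two (by omega) (fun x : {x : Fin m // x ≠ d} => bTwo d x.1) d
    fun _ y hy => bTwo_strict _ hy
  have hcard : (Fintype.card {x : Fin m // x ≠ d} : ℝ) = m - 1 := by
    rw [Fintype.card_subtype_compl, Fintype.card_subtype_eq, Fintype.card_fin,
      Nat.cast_sub (by omega)]
    simp
  have h1 : ∑ x : {x : Fin m // x ≠ d}, sc s (bTwo d x.1) univ y = s [1, 1, m - 2] 1 := by
    rw [Finset.sum_eq_single ⟨y, hy⟩]
    · rw [sc_bTwo hs hm hy.symm, if_neg hy, if_pos rfl]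
    · intro x _ hx
      rw [sc_bTwo hs hm x.2.symm, if_neg hy, if_neg]
      rintro rfl
      exact hx rfl
    · simp
  have h2 : ∑ x : {x : Fin m // x ≠ d}, sc s (bTwo d x.1) univ d =
      (m - 1) * s [1, 1, m - 2] 0 := by
    rw [Finset.sum_congr rfl fun x _ => by rw [sc_bTwo hs hm x.2.symm, if_pos rfl],
      Finset.sum_const, Finset.card_univ, nsmul_eq_mul, hcard]
  rw [h1, h2, hcard] at h
  exact h

lemma Good.mid_ge' (hs : Good s) (hm : 3 ≤ m) :
    (m - 2) * s [1, m - 2, 1] 1 + (m - 1) * s [m - 1, 1] 0 ≤ (m - 1) * s [1, m - 2, 1] 0 := by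
  set d : Fin m := ⟨0, by omega⟩
  obtain ⟨y, hy, h⟩ := hs.lift_two (by omega) (fun x : {x : Fin m // x ≠ d} => bMid d x.1) d
    fun _ y hy => bMid_strict _ hy
  have hcard : (Fintype.card {x : Fin m // x ≠ d} : ℝ) = m - 1 := by
    rw [Fintype.card_subtype_compl, Fintype.card_subtype_eq, Fintype.card_fin,
      Nat.cast_sub (by omega)]
    simp
  have h1 : ∑ x : {x : Fin m // x ≠ d}, sc s (bMid d x.1) univ y =
      (m - 2) * s [1, m - 2, 1] 1 := by
    have : ∀ x : {x : Fin m // x ≠ d}, sc s (bMid d x.1) univ y =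
        s [1, m - 2, 1] 1 - if x = ⟨y, hy⟩ then s [1, m - 2, 1] 1 else 0 := by
      intro x
      rw [sc_bMid hs hm x.2.symm, if_neg hy]
      by_cases hxy : y = x.1
      · rw [if_pos hxy, if_pos (Subtype.ext hxy.symm), sub_self]
      · rw [if_neg hxy, if_neg (fun hc => hxy (by rw [hc])), sub_zero]
    rw [Finset.sum_congr rfl fun x _ => this x, Finset.sum_sub_distrib, Finset.sum_const,
      Finset.card_univ, nsmul_eq_mul, hcard, Finset.sum_ite_eq' univ]
    simp
    ring
  have h2 : ∑ x : {x : Fin m // x ≠ d}, sc s (bMid d x.1) univ d =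
      (m - 1) * s [1, m - 2, 1] 0 := by
    rw [Finset.sum_congr rfl fun x _ => by rw [sc_bMid hs hm x.2.symm, if_pos rfl],
      Finset.sum_const, Finset.card_univ, nsmul_eq_mul, hcard]
  rw [h1, h2, hcard] at h
  exact h

lemma Good.two_second (hs : Good s) (hm : 3 ≤ m) : s [1, 1, m - 2] 1 = 0 := by
  by_contra hne
  have hpos : 0 < s [1, 1, m - 2] 1 := lt_of_le_of_ne (hs.nn _ _) (Ne.symm hne)
  have hm' : (3 : ℝ) ≤ m := by exact_mod_cast hm
  have hT : s [m - 1, 1] 0 < s [1, 1, m - 2] 0 := by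
    have := hs.two_ge' hm
    by_contra hc
    nlinarith
  set d : Fin m := ⟨0, by omega⟩
  set a : Fin m := ⟨1, by omega⟩
  have had : a ≠ d := by simp [a, d]
  set ι := {x : Fin m // x ≠ d ∧ x ≠ a}
  have hin : Nonempty ι := ⟨⟨⟨2, by omega⟩, by simp [a, d]⟩⟩
  have hc : 0 < (Fintype.card ι : ℝ) := by exact_mod_cast Fintype.card_pos
  have ha : ∑ x : ι, sc s (bTwo d x.1) univ a = 0 := by
    apply Finset.sum_eq_zero
    intro x _
    rw [sc_bTwo hs hm x.2.1.symm, if_neg had, if_neg x.2.2.symm]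
  refine hs.cohesive_obstruction hm (fun x : ι => bTwo d x.1) a d had
    (fun _ y hy => bTwo_strict _ hy) ?_ ?_
  · intro y hya hyd
    rw [ha, Finset.sum_eq_single ⟨y, hyd, hya⟩]
    · rwa [sc_bTwo hs hm hyd.symm, if_neg hyd, if_pos rfl]
    · intro x _ hx
      rw [sc_bTwo hs hm x.2.1.symm, if_neg hyd, if_neg]
      rintro rfl
      exact hx rfl
    · simp
  · rw [ha, Finset.sum_congr rfl fun x _ => by rw [sc_bTwo hs hm x.2.1.symm, if_pos rfl],
      Finset.sum_const, Finset.card_univ, nsmul_eq_mul]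
    nlinarith

lemma Good.mid_second (hs : Good s) (hm : 3 ≤ m) : s [1, m - 2, 1] 1 = 0 := by
  by_contra hne
  have hpos : 0 < s [1, m - 2, 1] 1 := lt_of_le_of_ne (hs.nn _ _) (Ne.symm hne)
  have hm' : (3 : ℝ) ≤ m := by exact_mod_cast hm
  have hT : s [m - 1, 1] 0 < s [1, m - 2, 1] 0 := by
    have := hs.mid_ge' hm
    by_contra hc
    nlinarith
  set d : Fin m := ⟨0, by omega⟩
  set a : Fin m := ⟨1, by omega⟩
  have had : a ≠ d := by simp [a, d]
  refine hs.cohesive_obstruction hm (fun _ : Unit => bMid d a) a d had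
    (fun _ y hy => bMid_strict _ hy) ?_ ?_
  · intro y hya hyd
    simpa [sc_bMid hs hm had.symm, had, hya, hyd] using hpos
  · simpa [sc_bMid hs hm had.symm, had] using hT

lemma Good.two_ge (hs : Good s) (hm : 3 ≤ m) : s [m - 1, 1] 0 ≤ s [1, 1, m - 2] 0 := by
  have h1 := hs.two_ge' hm
  have h2 := hs.nn [1, 1, m - 2] 1
  have hm' : (3 : ℝ) ≤ m := by exact_mod_cast hm
  by_contra hc
  nlinarith

end Lift

/-! ### Three candidates -/

section Three

variable {s : List ℕ → ℕ → ℝ}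

lemma sc_eq_two {C : Type} (s : List ℕ → ℕ → ℝ) (w : WeakOrder C) (A : Finset C) (ρ : C → ℕ)
    (p q : ℕ) (hrel : ∀ x ∈ A, ∀ y ∈ A, w.rel x y ↔ ρ x ≤ ρ y) (hlt : ∀ x ∈ A, ρ x < 2)
    (h0 : (A.filter fun x => ρ x = 0).card = p) (h1 : (A.filter fun x => ρ x = 1).card = q)
    (hp : 0 < p) (hq : 0 < q) {a : C} (ha : a ∈ A) : sc s w A a = s [p, q] (ρ a) := by
  refine sc_eq s w A ρ [p, q] hrel hlt (fun j hj => ?_) (by simp [hp, hq]) ha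
  have hj : j < 2 := hj
  interval_cases j
  · exact h0
  · exact h1

lemma sc_eq_three {C : Type} (s : List ℕ → ℕ → ℝ) (w : WeakOrder C) (A : Finset C) (ρ : C → ℕ)
    (p q r : ℕ) (hrel : ∀ x ∈ A, ∀ y ∈ A, w.rel x y ↔ ρ x ≤ ρ y) (hlt : ∀ x ∈ A, ρ x < 3)
    (h0 : (A.filter fun x => ρ x = 0).card = p) (h1 : (A.filter fun x => ρ x = 1).card = q)
    (h2 : (A.filter fun x => ρ x = 2).card = r)
    (hp : 0 < p) (hq : 0 < q) (hr : 0 < r) {a : C} (ha : a ∈ A) :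
    sc s w A a = s [p, q, r] (ρ a) := by
  refine sc_eq s w A ρ [p, q, r] hrel hlt (fun j hj => ?_) (by simp [hp, hq, hr]) ha
  have hj : j < 3 := hj
  interval_cases j
  · exact h0
  · exact h1
  · exact h2

lemma card_filter_fin4 (A : Finset (Fin 4)) (p : Fin 4 → Prop) [DecidablePred p] :
    (A.filter p).card = (if 0 ∈ A ∧ p 0 then 1 else 0) + (if 1 ∈ A ∧ p 1 then 1 else 0) +
      (if 2 ∈ A ∧ p 2 then 1 else 0) + (if 3 ∈ A ∧ p 3 then 1 else 0) := by
  have : A.filter p = univ.filter fun x => x ∈ A ∧ p x := by ext x; simp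
  rw [this, Finset.card_filter, Fin.sum_univ_four]

/-- Otherwise, in a profile of ballots `a ≻ d ≻ b`, `ab ≻ d`, `d ≻ ab` and `b ≻ ad`, candidate `a`
can be eliminated first and `d` wins, against the cohesive majority around `a`. -/
lemma Good.three_le_two (hs : Good s) : s [1, 2] 0 ≤ s [1, 1, 1] 0 := by
  by_contra hlt
  rw [not_le] at hlt
  have hzy : s [2, 1] 0 ≤ s [1, 1, 1] 0 := hs.two_ge (m := 3) le_rfl
  have hw : s [1, 1, 1] 1 = 0 := hs.two_second (m := 3) le_rfl
  obtain ⟨e, he⟩ := (eventually_lin (s [1, 1, 1] 0) _ _ hlt).exists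
  obtain ⟨K, hK⟩ := (eventually_lin ((e + 1) * s [1, 1, 1] 0) _ _ (hzy.trans_lt hlt)).exists
  -- `a = 0`, `d = 1`, `b = 2`
  set cnt : Fin 4 → ℕ := ![e + 1, K, K, e] with hcnt
  set w : Fin 4 → WeakOrder (Fin 3) := ![bTwo 0 1, bBot 1, bTop 1, bTop 2] with hw'
  have hsc : ∀ x, score s cnt w univ x = (e + 1) * sc s (bTwo 0 1) univ x +
      K * sc s (bBot 1) univ x + K * sc s (bTop 1) univ x + e * sc s (bTop 2) univ x := by
    intro x
    simp [score, Fin.sum_univ_four, hcnt, hw']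
  have h1 : W s cnt w (univ.erase 0) = {1} := by
    apply hs.majority cnt w (univ.erase 0) {0, 2} _ (by simp)
    · simp [Fin.forall_fin_succ, hw', ofRank_strict, bTwo, bTop]
    · simp [Fin.sum_univ_four, hcnt]; omega
  have h2 : (1 : Fin 3) ∈ W s cnt w univ := by
    refine W_erase_of_lowest s cnt w univ (by simp) (c := 0) (by simp) ?_ (by rw [h1]; simp)
    intro x _ hx
    rw [hsc, hsc]
    simp only [sc_bTwo hs le_rfl (show (0 : Fin 3) ≠ 1 by simp), sc_bBot hs (show 2 ≤ 3 by omega),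
      sc_bTop hs (show 2 ≤ 3 by omega), Nat.reduceSub, hw]
    fin_cases x <;> simp at hx ⊢ <;> linarith
  obtain ⟨i, hi, hi2⟩ := hs.cohesive cnt w univ {0, 1}
    (by simp [Fin.sum_univ_four, hcnt]; omega) (Finset.mem_univ 0)
    (by simp [Fin.forall_fin_succ, hw', ofRank, bTwo, bBot]) h2
  have := hi2 0 (by simp)
  simp only [Finset.mem_insert, Finset.mem_singleton] at hi
  rcases hi with rfl | rfl <;> simp [hw', ofRank, bTwo, bBot] at this

lemma Good.app_le_two (hs : Good s) : ∀ k ≤ 2, App s k := by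
  intro k hk
  interval_cases k
  · exact app_zero s
  · exact app_one s
  · exact hs.app_two

/-- Otherwise take ballots `bbc ≻ a`, `a ≻ c ≻ bb`, `bb ≻ ac`, where `bb` is a pair of clones: with
both clones `a` can be eliminated first and `c` wins, whereas with a single one `c` is eliminated
first. -/
lemma Good.two_le_three_aux (hs : Good s) (hlt : s [2, 1] 0 < s [1, 1, 1] 0) :
    s [3, 1] 0 < s [1, 1, 2] 0 := by
  by_contra hle
  rw [not_lt] at hle
  have hw : s [1, 1, 1] 1 = 0 := hs.two_second (m := 3) le_rfl
  have hw4 : s [1, 1, 2] 1 = 0 := hs.two_second (m := 4) (by omega)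
  have hx : 0 < s [1, 2] 0 := hs.top_pos (m := 3) (by omega)
  have hz : 0 < s [1, 1, 1] 0 := hs.two_pos (m := 3) le_rfl
  obtain ⟨A, hA2, hA⟩ := ((Filter.eventually_ge_atTop 2).and
    (eventually_lin (s [2, 1] 0 + 1) _ _ hlt)).exists
  -- `a = 0`, `c = 1`, `b = 2`, `b' = 3`
  set cnt : Fin 3 → ℕ := ![A + 1, A, 1] with hcnt
  set w : Fin 3 → WeakOrder (Fin 4) := ![bBot 0, bTwo 0 1, ofRank ![1, 1, 0, 0]] with hw'
  have htw : ∀ B, ∀ i, Twins (w i) B 2 3 := by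
    intro B i c hc h2 h3
    fin_cases i <;> fin_cases c <;> simp [hw', ofRank, bBot, bTwo] at h2 h3 ⊢
  have h1 : (1 : Fin 4) ∈ W s cnt w univ := by
    refine W_erase_of_lowest s cnt w univ (by simp) (c := 0) (by simp) ?_ ?_
    · intro x _ hx0
      have hsc : ∀ x, score s cnt w univ x = (A + 1) * sc s (bBot 0) univ x +
          A * sc s (bTwo 0 1) univ x + sc s (ofRank ![1, 1, 0, 0]) univ x := by
        intro x
        simp [score, Fin.sum_univ_three, hcnt, hw']
      have hnn := sc_nonneg hs (ofRank ![1, 1, 0, 0]) univ x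
      have h0 : sc s (ofRank (![1, 1, 0, 0] : Fin 4 → ℕ)) univ 0 = 0 := by
        rw [sc_eq_two s _ univ ![1, 1, 0, 0] 2 2 (fun _ _ _ _ => Iff.rfl)
          (by simp [Fin.forall_fin_succ]) (by simp [card_filter_fin4])
          (by simp [card_filter_fin4]) (by simp) (by simp) (by simp)]
        exact hs.last _ _ rfl
      have ht := hs.nn [3, 1] 0
      have hA0 : (0 : ℝ) ≤ A := by positivity
      rw [hsc, hsc, h0]
      simp only [sc_bTwo hs (show 3 ≤ 4 by omega) (show (0 : Fin 4) ≠ 1 by simp),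
        sc_bBot hs (show 2 ≤ 4 by omega), Nat.reduceSub, hw4, if_neg hx0]
      simp
      nlinarith
    · have hcl := (hs.clone_pair cnt w (univ.erase 0) (b := 2) (b' := 3) (by simp) (by simp)
        (by simp) (htw _)).1 1 (by simp) (by simp) (by simp)
      rw [hcl]
      have hset : ((univ : Finset (Fin 4)).erase 0).erase 3 = {1, 2} := by
        ext x; fin_cases x <;> simp
      rw [hset, app_wins cnt w {1, 2} hs.app_le_two (c := 1) (by simp) {0, 1} {1}]
      · simp
      · simp [hw', ofRank, bTwo, bBot]
      · simp [hw', ofRank_strict, bTwo]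
      · simp [hcnt, Fin.sum_univ_three]
        omega
  rw [(hs.clone_pair cnt w univ (b := 2) (b' := 3) (by simp) (by simp)
        (by simp) (htw _)).1 1 (by simp) (by simp) (by simp)] at h1
  refine not_mem_W_of_unique_lowest s cnt w (univ.erase 3) (by simp) (c := 1) (by simp) ?_ h1
  intro x hxA hx1
  have hb0 : ∀ x ∈ (univ : Finset (Fin 4)).erase 3, sc s (bBot (0 : Fin 4)) (univ.erase 3) x =
      s [2, 1] (![1, 0, 0, 0] x) := fun x hx => by
    apply sc_eq_two s _ _ ![1, 0, 0, 0] _ _ _ _ _ _ _ _ hx <;>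
    simp [Fin.forall_fin_succ, ofRank, bBot, card_filter_fin4]
  have hb1 : ∀ x ∈ (univ : Finset (Fin 4)).erase 3, sc s (bTwo (0 : Fin 4) 1) (univ.erase 3) x =
      s [1, 1, 1] (![0, 1, 2, 2] x) := fun x hx => by
    apply sc_eq_three s _ _ ![0, 1, 2, 2] _ _ _ _ _ _ _ _ _ _ _ hx <;>
    simp [Fin.forall_fin_succ, ofRank, bTwo, card_filter_fin4]
  have hb2 : ∀ x ∈ (univ : Finset (Fin 4)).erase 3,
      sc s (ofRank (![1, 1, 0, 0] : Fin 4 → ℕ)) (univ.erase 3) x =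
      s [1, 2] (![1, 1, 0, 0] x) := fun x hx => by
    apply sc_eq_two s _ _ ![1, 1, 0, 0] _ _ _ _ _ _ _ _ hx <;>
    simp [Fin.forall_fin_succ, ofRank, card_filter_fin4]
  have hsc : ∀ x ∈ (univ : Finset (Fin 4)).erase 3, score s cnt w (univ.erase 3) x =
      (A + 1) * s [2, 1] (![1, 0, 0, 0] x) +
      A * s [1, 1, 1] (![0, 1, 2, 2] x) + s [1, 2] (![1, 1, 0, 0] x) := by
    intro x hx
    rw [← hb0 x hx, ← hb1 x hx, ← hb2 x hx]
    simp [score, Fin.sum_univ_three, hcnt, hw']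
  rw [hsc 1 (by simp), hsc x hxA]
  have l1 : s [2, 1] 1 = 0 := hs.last _ _ rfl
  have l2 : s [1, 1, 1] 2 = 0 := hs.last _ _ rfl
  have l3 : s [1, 2] 1 = 0 := hs.last _ _ rfl
  fin_cases x <;> simp [l1, l2, l3, hw] at hx1 hxA ⊢ <;> linarith

/-- Otherwise `d` can win a profile of six kinds of ballots although a cohesive majority has `a` on
top and never `d`. -/
lemma Good.two_le_three (hs : Good s) : s [1, 1, 1] 0 ≤ s [2, 1] 0 := by
  by_contra hlt
  rw [not_le] at hlt
  have htT := hs.two_le_three_aux hlt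
  have hw : s [1, 1, 1] 1 = 0 := hs.two_second (m := 3) le_rfl
  obtain ⟨q, hq1, hq2⟩ := ((eventually_lin (s [3, 1] 0) _ _ htT).and
    (eventually_lin (s [1, 1, 1] 0) _ _ hlt)).exists
  -- `a = 0`, `b = 1`, `c = 2`, `d = 3`
  set cnt : Fin 6 → ℕ := ![1, 1, q + 1, 1, 1, q] with hcnt
  set w : Fin 6 → WeakOrder (Fin 4) := ![ofRank ![0, 0, 2, 1], ofRank ![0, 2, 0, 1], bBot 3,
    ofRank ![2, 0, 1, 0], ofRank ![2, 1, 0, 0], bTwo 3 1] with hw'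
  have h211 : ∀ (r : Fin 4 → ℕ) (x : Fin 4), (univ.filter fun x => r x = 0).card = 2 →
      (univ.filter fun x => r x = 1).card = 1 → (univ.filter fun x => r x = 2).card = 1 →
      (∀ x ∈ univ, r x < 3) → sc s (ofRank r) univ x = s [2, 1, 1] (r x) :=
    fun r x h0 h1 h2 h3 => sc_eq_three s _ univ r 2 1 1 (fun _ _ _ _ => Iff.rfl) h3 h0 h1 h2
      (by simp) (by simp) (by simp) (Finset.mem_univ x)
  have l1 : s [2, 1] 1 = 0 := hs.last _ _ rfl
  have l2 : s [1, 1, 1] 2 = 0 := hs.last _ _ rfl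
  have l3 : s [2, 1, 1] 2 = 0 := hs.last _ _ rfl
  have hcd : (3 : Fin 4) ∈ W s cnt w ((univ.erase 0).erase 1) := by
    have hset : ((univ : Finset (Fin 4)).erase 0).erase 1 = {2, 3} := by
      ext x; fin_cases x <;> simp
    have hset' : ({2, 3} : Finset (Fin 4)).erase 2 = {3} := by
      ext x; fin_cases x <;> simp
    rw [hset]
    refine W_erase_of_lowest s cnt w {2, 3} (by simp) (c := 2) (by simp) ?_ ?_
    · intro x hx hx2
      obtain rfl : x = 3 := by simpa [hx2] using hx
      rw [App.score_le_iff (by simpa using hs.app_two) cnt w (by simp) (by simp)]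
      simp [appr, Fin.sum_univ_six, hcnt, hw', ofRank, bBot, bTwo]
      omega
    · rw [hset', W_of_card_le_one _ _ _ _ (by simp)]
      simp
  have hbcd : (3 : Fin 4) ∈ W s cnt w (univ.erase 0) := by
    refine W_erase_of_lowest s cnt w _ (by simp) (c := 1) (by simp) ?_ hcd
    intro x hx hx1
    have e0 : ∀ x ∈ (univ : Finset (Fin 4)).erase 0,
        sc s (ofRank (![0, 0, 2, 1] : Fin 4 → ℕ)) (univ.erase 0) x =
          s [1, 1, 1] (![0, 0, 2, 1] x) := fun x hx => by
      apply sc_eq_three s _ _ ![0, 0, 2, 1] _ _ _ _ _ _ _ _ _ _ _ hx <;>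
      simp [Fin.forall_fin_succ, ofRank, card_filter_fin4]
    have e1 : ∀ x ∈ (univ : Finset (Fin 4)).erase 0,
        sc s (ofRank (![0, 2, 0, 1] : Fin 4 → ℕ)) (univ.erase 0) x =
          s [1, 1, 1] (![0, 2, 0, 1] x) := fun x hx => by
      apply sc_eq_three s _ _ ![0, 2, 0, 1] _ _ _ _ _ _ _ _ _ _ _ hx <;>
      simp [Fin.forall_fin_succ, ofRank, card_filter_fin4]
    have e2 : ∀ x ∈ (univ : Finset (Fin 4)).erase 0,
        sc s (bBot (3 : Fin 4)) (univ.erase 0) x = s [2, 1] (![0, 0, 0, 1] x) := fun x hx => by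
      apply sc_eq_two s _ _ ![0, 0, 0, 1] _ _ _ _ _ _ _ _ hx <;>
      simp [Fin.forall_fin_succ, ofRank, bBot, card_filter_fin4]
    have e3 : ∀ x ∈ (univ : Finset (Fin 4)).erase 0,
        sc s (ofRank (![2, 0, 1, 0] : Fin 4 → ℕ)) (univ.erase 0) x =
          s [2, 1] (![0, 0, 1, 0] x) := fun x hx => by
      apply sc_eq_two s _ _ ![0, 0, 1, 0] _ _ _ _ _ _ _ _ hx <;>
      simp [Fin.forall_fin_succ, ofRank, card_filter_fin4]
    have e4 : ∀ x ∈ (univ : Finset (Fin 4)).erase 0,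
        sc s (ofRank (![2, 1, 0, 0] : Fin 4 → ℕ)) (univ.erase 0) x =
          s [2, 1] (![0, 1, 0, 0] x) := fun x hx => by
      apply sc_eq_two s _ _ ![0, 1, 0, 0] _ _ _ _ _ _ _ _ hx <;>
      simp [Fin.forall_fin_succ, ofRank, card_filter_fin4]
    have e5 : ∀ x ∈ (univ : Finset (Fin 4)).erase 0,
        sc s (bTwo (3 : Fin 4) 1) (univ.erase 0) x = s [1, 1, 1] (![0, 1, 2, 0] x) :=
      fun x hx => by
      apply sc_eq_three s _ _ ![0, 1, 2, 0] _ _ _ _ _ _ _ _ _ _ _ hx <;>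
      simp [Fin.forall_fin_succ, ofRank, bTwo, card_filter_fin4]
    have hsc : ∀ x ∈ (univ : Finset (Fin 4)).erase 0, score s cnt w (univ.erase 0) x =
        s [1, 1, 1] (![0, 0, 2, 1] x) + s [1, 1, 1] (![0, 2, 0, 1] x) +
        (q + 1) * s [2, 1] (![0, 0, 0, 1] x) + s [2, 1] (![0, 0, 1, 0] x) +
        s [2, 1] (![0, 1, 0, 0] x) + q * s [1, 1, 1] (![0, 1, 2, 0] x) := by
      intro x hx
      rw [← e0 x hx, ← e1 x hx, ← e2 x hx, ← e3 x hx, ← e4 x hx, ← e5 x hx]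
      simp [score, Fin.sum_univ_six, hcnt, hw']
    rw [hsc 1 (by simp), hsc x hx]
    fin_cases x <;> simp [l1, l2, hw] at hx hx1 ⊢; linarith
  have hall : (3 : Fin 4) ∈ W s cnt w univ := by
    refine W_erase_of_lowest s cnt w _ (by simp) (c := 0) (by simp) ?_ hbcd
    intro x _ hx0
    have hsc : ∀ x, score s cnt w univ x =
        s [2, 1, 1] (![0, 0, 2, 1] x) + s [2, 1, 1] (![0, 2, 0, 1] x) +
        (q + 1) * sc s (bBot 3) univ x + s [2, 1, 1] (![2, 0, 1, 0] x) +
        s [2, 1, 1] (![2, 1, 0, 0] x) + q * sc s (bTwo 3 1) univ x := by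
      intro x
      rw [← h211 ![0, 0, 2, 1] x, ← h211 ![0, 2, 0, 1] x, ← h211 ![2, 0, 1, 0] x,
        ← h211 ![2, 1, 0, 0] x]
      · simp [score, Fin.sum_univ_six, hcnt, hw']
      all_goals simp [card_filter_fin4, Fin.forall_fin_succ]
    have hv := hs.nn [2, 1, 1] 1
    rw [hsc, hsc]
    simp only [sc_bTwo hs (show 3 ≤ 4 by omega) (show (3 : Fin 4) ≠ 1 by simp),
      sc_bBot hs (show 2 ≤ 4 by omega), Nat.reduceSub]
    have hw4 : s [1, 1, 2] 1 = 0 := hs.two_second (m := 4) (by omega)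
    fin_cases x <;> simp [l3, hw4] at hx0 ⊢ <;> linarith
  obtain ⟨i, hi, hi2⟩ := hs.cohesive cnt w univ {0, 1, 2}
    (by simp [Fin.sum_univ_six, hcnt]; omega) (Finset.mem_univ 0)
    (by simp [Fin.forall_fin_succ, hw', ofRank, bBot]) hall
  have := hi2 0 (by simp)
  simp only [Finset.mem_insert, Finset.mem_singleton] at hi
  rcases hi with rfl | rfl | rfl <;> simp [hw', ofRank, bBot] at this

lemma Good.app_three (hs : Good s) : App s 3 := by
  have hx : 0 < s [1, 2] 0 := hs.top_pos (m := 3) (by omega)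
  have h1 := hs.three_le_two
  have h2 := hs.two_le_three
  have h3 : s [2, 1] 0 ≤ s [1, 2] 0 := hs.top_ge (m := 3) (by omega)
  have hw : s [1, 1, 1] 1 = 0 := hs.two_second (m := 3) le_rfl
  refine ⟨s [1, 2] 0, hx, fun τ h0 hp hl => ?_⟩
  rcases τ with _ | ⟨x, _ | ⟨y, _ | ⟨z, _ | ⟨u, τ⟩⟩⟩⟩
  · simp at hl
  · simp at hl
  · have hx := hp x (by simp)
    have hy := hp y (by simp)
    simp at h0
    have hj : ∀ j, 1 ≤ j → j < 2 → s [x, y] j = 0 := by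
      intro j h1 h2
      obtain rfl : j = 1 := by omega
      exact hs.last _ _ rfl
    refine ⟨?_, hj⟩
    obtain ⟨rfl, rfl⟩ | ⟨rfl, rfl⟩ : x = 1 ∧ y = 2 ∨ x = 2 ∧ y = 1 := by omega
    · rfl
    · linarith
  · have hx := hp x (by simp)
    have hy := hp y (by simp)
    have hz := hp z (by simp)
    simp at h0
    obtain ⟨rfl, rfl, rfl⟩ : x = 1 ∧ y = 1 ∧ z = 1 := by omega
    refine ⟨by linarith, fun j h1 h2 => ?_⟩
    have h2 : j < 3 := h2
    obtain rfl | rfl : j = 1 ∨ j = 2 := by omega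
    · exact hw
    · exact hs.last _ _ rfl
  · have hx := hp x (by simp)
    have hy := hp y (by simp)
    have hz := hp z (by simp)
    have hu := hp u (by simp)
    simp at h0
    omega

end Three

/-! ### The inductive step: ballots with a pair of clones -/

/-- The indicator of `x` being ranked on top by `v`. -/
noncomputable def topInd {m : ℕ} (v : WeakOrder (Fin m)) (x : Fin m) : ℕ :=
  if ∀ y, v.rel x y then 1 else 0

lemma topInd_le_one {m : ℕ} (v : WeakOrder (Fin m)) (x : Fin m) : topInd v x ≤ 1 := by
  unfold topInd; split_ifs <;> omega

/-- The auxiliary ballots: the ballot `v` under study, `a ≻ c ≻ rest`, `rest ≻ a`, `rest ≻ c`. -/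
def auxBallots {m : ℕ} (v : WeakOrder (Fin m)) (a c : Fin m) : Fin 4 → WeakOrder (Fin m) :=
  ![v, bTwo a c, bBot a, bBot c]

section Step

variable {s : List ℕ → ℕ → ℝ} {m : ℕ}

lemma score_aux (hs : Good s) (hm : 4 ≤ m) (v : WeakOrder (Fin m)) {a c : Fin m} (hac : a ≠ c)
    (N K₁ K₂ B : ℕ) (x : Fin m) : score s ![N, K₁, K₂, B] (auxBallots v a c) univ x =
      N * sc s v univ x + (if x = a then K₁ * s [1, 1, m - 2] 0 else 0) +
      (if x = a then 0 else K₂ * s [m - 1, 1] 0) + (if x = c then 0 else B * s [m - 1, 1] 0) := by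
  simp only [score, Fin.sum_univ_four, auxBallots, Matrix.cons_val]
  rw [sc_bTwo hs (by omega) hac, sc_bBot hs (by omega), sc_bBot hs (by omega),
    hs.two_second (by omega)]
  simp

/-- Approvals among `univ ∖ {b'}`, for candidates other than the clones. -/
lemma appr_aux (v : WeakOrder (Fin m)) {a c b b' : Fin m} (hac : a ≠ c) (hb : b ≠ b')
    (hab' : b' ≠ a) (hcb' : b' ≠ c) (htw : Twins v univ b b')
    (N K₁ K₂ B : ℕ) {x : Fin m} (hxb : x ≠ b) (hx : x ≠ b') :
    appr ![N, K₁, K₂, B] (auxBallots v a c) (univ.erase b') x =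
      N * topInd v x + (if x = a then K₁ else 0) + (if x = a then 0 else K₂) +
        (if x = c then 0 else B) := by
  have h0 : (∀ y ∈ univ.erase b', v.rel x y) ↔ ∀ y, v.rel x y := by
    constructor
    · intro h y
      by_cases hy : y = b'
      · subst hy
        exact ((htw x (by simp) hxb hx).2).1 (h b (by simp [hb]))
      · exact h y (by simp [hy])
    · exact fun h y _ => h y
  have h1 : (∀ y ∈ univ.erase b', (bTwo a c).rel x y) ↔ x = a := by
    constructor
    · intro h
      by_contra hxa
      exact (bTwo_strict c hxa).2 (h a (by simp [hab'.symm]))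
    · rintro rfl y _
      simp [bTwo, ofRank]
  have h2 : ∀ d d', d' ≠ b' → d' ≠ d →
      ((∀ y ∈ univ.erase b', (bBot d).rel x y) ↔ x ≠ d) := by
    intro d d' hd1 hd2
    constructor
    · rintro h rfl
      exact (bBot_strict hd2).2 (h d' (by simp [hd1]))
    · intro h y _
      simp [bBot, ofRank, h]
  simp only [appr, Fin.sum_univ_four, auxBallots, Matrix.cons_val, h0, h1,
    h2 a c hcb'.symm hac.symm, h2 c a hab'.symm hac, topInd]
  split_ifs <;> simp_all

lemma le_appr_aux (v : WeakOrder (Fin m)) {a c : Fin m} (A : Finset (Fin m))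
    (N K₁ K₂ B : ℕ) {x : Fin m} (hxa : x ≠ a) (hxc : x ≠ c) :
    K₂ + B ≤ appr ![N, K₁, K₂, B] (auxBallots v a c) A x := by
  have h : ∀ d, x ≠ d → ∀ y ∈ A, (bBot d).rel x y := by
    intro d hd y _
    simp [bBot, ofRank, hd]
  have h2 : ∀ y ∈ A, (auxBallots v a c 2).rel x y := h a hxa
  have h3 : ∀ y ∈ A, (auxBallots v a c 3).rel x y := h c hxc
  rw [appr, Fin.sum_univ_four, if_pos h2, if_pos h3]
  simp only [Matrix.cons_val]
  omega

lemma twins_aux {v : WeakOrder (Fin m)} {a c b b' : Fin m} (hba : b ≠ a) (hbc : b ≠ c)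
    (hba' : b' ≠ a) (hbc' : b' ≠ c) (htw : Twins v univ b b') :
    ∀ i, Twins (auxBallots v a c i) univ b b' := by
  intro i
  fin_cases i
  · exact htw
  all_goals
    intro x _ _ _
    simp [auxBallots, bTwo, bBot, ofRank, hba, hbc, hba', hbc']

lemma W_aux (hA : ∀ k < m, App s k) (v : WeakOrder (Fin m)) {a c : Fin m} (hac : a ≠ c)
    {N K₁ K₂ B : ℕ} (hK : N + B < K₁) (A : Finset (Fin m)) (ha : a ∉ A) (hc : c ∈ A) :
    W s ![N, K₁, K₂, B] (auxBallots v a c) A = {c} := by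
  have hcard : A.card < m := by
    simpa using Finset.card_lt_univ_of_notMem ha
  refine app_wins _ _ A (fun k hk => hA k (by omega)) hc {1, 2} {1} ?_ ?_ ?_
  · intro i hi x hx
    have hxa : x ≠ a := fun h => ha (h ▸ hx)
    simp only [Finset.mem_insert, Finset.mem_singleton] at hi
    rcases hi with rfl | rfl
    · by_cases hxc : x = c <;> simp [auxBallots, bTwo, ofRank, hac.symm, hxa, hxc]
    · simp [auxBallots, bBot, ofRank, hac.symm]
  · intro i hi x hx hxc
    have hxa : x ≠ a := fun h => ha (h ▸ hx)
    simp only [Finset.mem_singleton] at hi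
    subst hi
    simp [auxBallots, bTwo, WeakOrder.strict, ofRank, hac.symm, hxa, hxc]
  · simp [Fin.sum_univ_four]
    omega

/-- First obstruction: `a` is the unique first elimination after identifying the clones, so that
`c` wins, while `c` may be eliminated first with both clones present. -/
lemma Good.obstruction_one (hs : Good s) (hm : 4 ≤ m) (hA : ∀ k < m, App s k)
    (v : WeakOrder (Fin m)) {a c b b' : Fin m} (hac : a ≠ c) (hb : b ≠ b') (hba : b ≠ a)
    (hbc : b ≠ c) (hba' : b' ≠ a) (hbc' : b' ≠ c) (htw : Twins v univ b b') (N K₁ K₂ B : ℕ)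
    (h1 : N + B < K₁) (h2 : N < B) (h3 : N * topInd v a + K₁ + B < N * topInd v c + K₂)
    (h4 : N * sc s v univ c + K₂ * s [m - 1, 1] 0 ≤
      N * sc s v univ a + K₁ * s [1, 1, m - 2] 0 + B * s [m - 1, 1] 0)
    (h5 : ∀ e, N * sc s v univ c ≤ N * sc s v univ e + B * s [m - 1, 1] 0) : False := by
  have hcard : ∀ x : Fin m, (univ.erase x).card = m - 1 := by simp
  have hW : W s ![N, K₁, K₂, B] (auxBallots v a c) (univ.erase b') = {c} := by
    rw [W_eq_of_unique_lowest s _ _ _ (by rw [hcard]; omega) (c := a) (by simp [hba'.symm]),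
      W_aux hA v hac h1 _ (by simp) (by simp [hac.symm, hbc'.symm])]
    intro d hd hda
    rw [App.score_lt_iff (hA _ (by rw [hcard]; omega)) _ _ (by simp [hba'.symm]) hd,
      appr_aux v hac hb hba' hbc' htw _ _ _ _ hba.symm hba'.symm]
    have hpc : N * topInd v c ≤ N := by
      simpa using Nat.mul_le_mul_left N (topInd_le_one v c)
    by_cases hdc : d = c
    · subst hdc
      rw [appr_aux v hac hb hba' hbc' htw _ _ _ _ hbc.symm hbc'.symm]
      simp [hac, hac.symm]
      omega
    · have := le_appr_aux v (univ.erase b') N K₁ K₂ B hda hdc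
      simp [hac]
      omega
  obtain ⟨x, hx⟩ := W_nonempty s ![N, K₁, K₂, B] (auxBallots v a c) (univ.erase c)
    (Finset.card_pos.1 (by rw [hcard]; omega))
  have hxc : x ≠ c := by
    rintro rfl
    exact Finset.notMem_erase _ _ (W_subset _ _ _ _ hx)
  have hxW : x ∈ W s ![N, K₁, K₂, B] (auxBallots v a c) univ := by
    refine W_erase_of_lowest s _ _ _ (by simp; omega) (Finset.mem_univ c) ?_ hx
    intro d _ hdc
    rw [score_aux hs hm v hac, score_aux hs hm v hac]
    by_cases hda : d = a
    · subst hda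
      simpa [hac, hac.symm] using h4
    · have := h5 d
      simp [hdc, hda, hac.symm]
      linarith
  obtain ⟨k1, k2⟩ := hs.clone_pair ![N, K₁, K₂, B] (auxBallots v a c) univ (Finset.mem_univ b)
    (Finset.mem_univ b') hb (twins_aux hba hbc hba' hbc' htw)
  rw [hW] at k1 k2
  simp only [Finset.mem_singleton] at k1 k2
  by_cases hxb : x = b
  · exact hbc (k2.2 (Or.inl (hxb ▸ hxW)))
  by_cases hxb' : x = b'
  · exact hbc (k2.2 (Or.inr (hxb' ▸ hxW)))
  exact hxc ((k1 x (Finset.mem_univ x) hxb hxb').1 hxW)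

/-- Second obstruction: `c` is the unique first elimination after identifying the clones, while
`a` may be eliminated first with both clones present, and then `c` wins. -/
lemma Good.obstruction_two (hs : Good s) (hm : 4 ≤ m) (hA : ∀ k < m, App s k)
    (v : WeakOrder (Fin m)) {a c b b' : Fin m} (hac : a ≠ c) (hb : b ≠ b') (hba : b ≠ a)
    (hbc : b ≠ c) (hba' : b' ≠ a) (hbc' : b' ≠ c) (htw : Twins v univ b b') (N K₁ K₂ B : ℕ)
    (h1 : N + B < K₁) (h2 : N < B) (h3 : N * topInd v c + K₂ < N * topInd v a + K₁ + B)
    (h4 : N * sc s v univ a + K₁ * s [1, 1, m - 2] 0 + B * s [m - 1, 1] 0 ≤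
      N * sc s v univ c + K₂ * s [m - 1, 1] 0)
    (h5 : ∀ e, N * sc s v univ a + K₁ * s [1, 1, m - 2] 0 ≤
      N * sc s v univ e + K₂ * s [m - 1, 1] 0) : False := by
  have hcard : ∀ x : Fin m, (univ.erase x).card = m - 1 := by simp
  have hW : c ∉ W s ![N, K₁, K₂, B] (auxBallots v a c) (univ.erase b') := by
    refine not_mem_W_of_unique_lowest s _ _ _ (by rw [hcard]; omega) (by simp [hbc'.symm]) ?_
    intro d hd hdc
    rw [App.score_lt_iff (hA _ (by rw [hcard]; omega)) _ _ (by simp [hbc'.symm]) hd,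
      appr_aux v hac hb hba' hbc' htw _ _ _ _ hbc.symm hbc'.symm]
    have hpc : N * topInd v c ≤ N := by
      simpa using Nat.mul_le_mul_left N (topInd_le_one v c)
    by_cases hda : d = a
    · subst hda
      rw [appr_aux v hac hb hba' hbc' htw _ _ _ _ hba.symm hba'.symm]
      simp [hac, hac.symm]
      omega
    · have := le_appr_aux v (univ.erase b') N K₁ K₂ B hda hdc
      simp [hac.symm]
      omega
  apply hW
  rw [← (hs.clone_pair ![N, K₁, K₂, B] (auxBallots v a c) univ (Finset.mem_univ b)
    (Finset.mem_univ b') hb (twins_aux hba hbc hba' hbc' htw)).1 c (Finset.mem_univ c) hbc.symm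
      hbc'.symm]
  refine W_erase_of_lowest s _ _ _ (by simp; omega) (Finset.mem_univ a) ?_ ?_
  · intro d _ hda
    rw [score_aux hs hm v hac, score_aux hs hm v hac]
    by_cases hdc : d = c
    · subst hdc
      simpa [hac, hac.symm] using h4
    · have := h5 d
      simp [hdc, hda, hac]
      linarith
  · rw [W_aux hA v hac h1 _ (by simp) (by simp [hac.symm])]
    simp

lemma Good.two_eq (hs : Good s) (hm : 4 ≤ m) (hA : ∀ k < m, App s k) :
    s [1, 1, m - 2] 0 = s [m - 1, 1] 0 := by
  refine le_antisymm (le_of_not_gt fun hlt => ?_) (hs.two_ge (by omega))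
  obtain ⟨K, hK, hK1⟩ := ((eventually_lin (s [m - 1, 1] 0) _ _ hlt).and
    (Filter.eventually_gt_atTop 1)).exists
  have ht := hs.nn [m - 1, 1] 0
  refine hs.obstruction_one hm hA (bTwo (⟨0, by omega⟩ : Fin m) ⟨1, by omega⟩)
    (a := ⟨0, by omega⟩) (c := ⟨1, by omega⟩) (b := ⟨2, by omega⟩) (b' := ⟨3, by omega⟩)
    (by simp) (by simp) (by simp) (by simp) (by simp) (by simp) ?_ 0 K (K + 2) 1
    (by omega) (by omega) (by omega) ?_ ?_
  · intro x _ _ _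
    simp [bTwo, ofRank]
  · push_cast
    linarith
  · intro e
    push_cast
    linarith

/-- Outside a pair of clones, the score differences of a ballot are those of approval, scaled by
the score `s [m - 1, 1] 0` of a candidate on the ballot `everyone else ≻ d`. -/
lemma Good.outside (hs : Good s) (hm : 4 ≤ m) (hA : ∀ k < m, App s k)
    (v : WeakOrder (Fin m)) {a c b b' : Fin m} (hb : b ≠ b') (hba : b ≠ a)
    (hbc : b ≠ c) (hba' : b' ≠ a) (hbc' : b' ≠ c) (htw : Twins v univ b b') :
    sc s v univ a - s [m - 1, 1] 0 * topInd v a = sc s v univ c - s [m - 1, 1] 0 * topInd v c := by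
  by_cases hac : a = c
  · rw [hac]
  have he := hs.two_eq hm hA
  have htpos : 0 < s [m - 1, 1] 0 := he ▸ hs.two_pos (m := m) (by omega)
  set t := s [m - 1, 1] 0
  have hB : ∀ N : ℕ, ∃ B : ℕ, N < B ∧ N * sc s v univ c + (1 + N) * t ≤ B * t ∧
      N * sc s v univ a + (1 + N) * t ≤ B * t := by
    intro N
    obtain ⟨B, h1, h2, h3⟩ := ((Filter.eventually_gt_atTop N).and
      ((eventually_lin (N * sc s v univ c + (1 + N) * t) 0 t htpos).and
      (eventually_lin (N * sc s v univ a + (1 + N) * t) 0 t htpos))).exists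
    exact ⟨B, h1, by linarith, by linarith⟩
  have hn : ∀ (N : ℕ) e, 0 ≤ N * sc s v univ e := fun N e =>
    mul_nonneg (Nat.cast_nonneg _) (sc_nonneg hs v univ e)
  have hpa : (topInd v a : ℝ) ≤ 1 := by exact_mod_cast topInd_le_one v a
  have hpc : (topInd v c : ℝ) ≤ 1 := by exact_mod_cast topInd_le_one v c
  by_contra hne
  rcases lt_or_gt_of_ne hne with hlt | hlt
  · obtain ⟨N, hN⟩ := (eventually_lin t (sc s v univ a + t * topInd v c)
      (sc s v univ c + t * topInd v a) (by linarith)).exists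
    obtain ⟨B, hB1, hB2, hB3⟩ := hB N
    refine hs.obstruction_two hm hA v hac hb hba hbc hba' hbc' htw N (2 + N + B + N * topInd v c)
      (1 + N + 2 * B + N * topInd v a) B (by omega) hB1 (by omega) ?_ ?_
    · rw [he]
      push_cast
      linarith
    · intro e
      have := hn N e
      have h1 : (N : ℝ) * topInd v c * t ≤ N * t := by
        apply mul_le_mul_of_nonneg_right _ htpos.le
        exact mul_le_of_le_one_right (Nat.cast_nonneg _) hpc
      have h2 : 0 ≤ (N : ℝ) * topInd v a * t := by positivity
      rw [he]
      push_cast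
      linarith
  · obtain ⟨N, hN⟩ := (eventually_lin t (sc s v univ c + t * topInd v a)
      (sc s v univ a + t * topInd v c) (by linarith)).exists
    obtain ⟨B, hB1, hB2, hB3⟩ := hB N
    refine hs.obstruction_one hm hA v hac hb hba hbc hba' hbc' htw N (1 + N + B + N * topInd v c)
      (2 + N + 2 * B + N * topInd v a) B (by omega) hB1 (by omega) ?_ ?_
    · rw [he]
      push_cast
      linarith
    · intro e
      have := hn N e
      have h3 : 0 ≤ (1 + (N : ℝ)) * t := by positivity
      linarith

end Step

/-! ### At least five candidates -/

section Five

variable {s : List ℕ → ℕ → ℝ} {m : ℕ}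

/-- Every list of positive sizes summing to `m` is the list of fibre sizes of a monotone rank
function on `Fin m`. -/
lemma exists_rank (τ : List ℕ) (hsum : τ.sum = m) (hpos : ∀ x ∈ τ, 0 < x) :
    ∃ ρ : Fin m → ℕ, Monotone ρ ∧ (∀ x, ρ x < τ.length) ∧
      (∀ (j : ℕ) (h : j < τ.length), (univ.filter fun x => ρ x = j).card = τ[j]) := by
  let c : Composition m := ⟨τ, fun {i} hi => hpos i hi, hsum⟩
  refine ⟨fun x => c.index x, ?_, fun x => (c.index x).2, ?_⟩
  · intro x y hxy
    by_contra hlt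
    rw [not_le] at hlt
    have h1 := c.lt_sizeUpTo_index_succ y
    have h2 := c.sizeUpTo_index_le x
    have h3 : c.sizeUpTo (c.index y + 1) ≤ c.sizeUpTo (c.index x) :=
      c.monotone_sizeUpTo hlt
    have h4 : (x : ℕ) ≤ y := hxy
    rw [Fin.val_succ] at h1
    omega
  · intro j h
    have himg : (univ.filter fun x => (c.index x : ℕ) = j) =
        univ.map (c.embedding ⟨j, h⟩).toEmbedding := by
      ext x
      have := c.mem_range_embedding_iff' (j := x) (i := ⟨j, h⟩)
      simp only [Finset.mem_filter, Finset.mem_univ, true_and, Finset.mem_map,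
        RelEmbedding.coe_toEmbedding]
      rw [Set.mem_range] at this
      rw [this, Fin.ext_iff]
      exact eq_comm
    rw [himg, Finset.card_map, Finset.card_univ, Fintype.card_fin]
    rfl

lemma twins_of_eq {C : Type} (ρ : C → ℕ) (A : Finset C) {b b' : C} (h : ρ b = ρ b') :
    Twins (ofRank ρ) A b b' := by
  intro c _ _ _
  simp [ofRank, h]

/-- Two consecutive candidates forming singleton classes are clones. -/
lemma twins_of_lt (ρ : Fin m → ℕ) {b b' : Fin m} (hbb : (b : ℕ) + 1 = b')
    (h : ρ b < ρ b') (hl : ∀ x < b, ρ x < ρ b) (hr : ∀ x > b', ρ b' < ρ x) :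
    Twins (ofRank ρ) univ b b' := by
  intro c _ h1 h2
  rcases lt_or_ge c b with hc | hc
  · have := hl c hc
    constructor <;> simp only [ofRank] <;> omega
  · have hc' : b' < c := by
      have h3 : (b : ℕ) ≤ c := hc
      have h4 : (c : ℕ) ≠ b := fun h => h1 (Fin.ext h)
      have h5 : (c : ℕ) ≠ b' := fun h => h2 (Fin.ext h)
      show (b' : ℕ) < c
      omega
    have := hr c hc'
    constructor <;> simp only [ofRank] <;> omega

/-- A function which is constant off each pair of clones of a ballot is constant: a ballot on
at least five candidates has a clone pair near the top and one near the bottom. -/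
lemma const_of_twins (hm : 5 ≤ m) (ρ : Fin m → ℕ) (hρ : Monotone ρ) (f : Fin m → ℝ)
    (H : ∀ b b' a c : Fin m, b ≠ b' → Twins (ofRank ρ) univ b b' → b ≠ a → b ≠ c → b' ≠ a →
      b' ≠ c → f a = f c) : ∀ x y, f x = f y := by
  -- it suffices to find two disjoint pairs, since some candidate lies outside both
  have hdis : ∀ b b' d d' : Fin m, b < b' → b' < d → d < d' → Twins (ofRank ρ) univ b b' →
      Twins (ofRank ρ) univ d d' → ∀ x y, f x = f y := by
    intro b b' d d' h1 h2 h3 t1 t2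
    obtain ⟨z, hz⟩ : ∃ z, z ∉ ({b, b', d, d'} : Finset (Fin m)) := by
      by_contra hc
      push Not at hc
      have h4 := Finset.card_le_four (a := b) (b := b') (c := d) (d := d')
      rw [Finset.eq_univ_of_forall hc, Finset.card_univ, Fintype.card_fin] at h4
      omega
    simp only [Finset.mem_insert, Finset.mem_singleton, not_or] at hz
    have hall : ∀ x, f x = f z := by
      intro x
      by_cases hx : x = b ∨ x = b'
      · apply H d d' x z h3.ne t2 _ (Ne.symm hz.2.2.1) _ (Ne.symm hz.2.2.2)
        · rcases hx with rfl | rfl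
          · exact (h1.trans h2).ne'
          · exact h2.ne'
        · rcases hx with rfl | rfl
          · exact (h1.trans (h2.trans h3)).ne'
          · exact (h2.trans h3).ne'
      · rw [not_or] at hx
        exact H b b' x z h1.ne t1 (Ne.symm hx.1) (Ne.symm hz.1) (Ne.symm hx.2) (Ne.symm hz.2.1)
    intro x y
    rw [hall x, hall y]
  have hle : ∀ i j : ℕ, ∀ (hi : i < m) (hj : j < m), i ≤ j → ρ ⟨i, hi⟩ ≤ ρ ⟨j, hj⟩ :=
    fun i j hi hj hij => hρ hij
  have htop : Twins (ofRank ρ) univ ⟨0, by omega⟩ ⟨1, by omega⟩ ∨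
      ρ ⟨1, by omega⟩ = ρ ⟨2, by omega⟩ := by
    by_cases h2 : ρ ⟨1, by omega⟩ = ρ ⟨2, by omega⟩
    · exact Or.inr h2
    left
    have h12 := hle 1 2 (by omega) (by omega) (by omega)
    rcases (hle 0 1 (by omega) (by omega) (by omega)).eq_or_lt with h | h
    · exact twins_of_eq ρ _ h
    · refine twins_of_lt ρ rfl h (fun x hx => ?_) (fun x hx => ?_)
      · exact absurd (show (x : ℕ) < 0 from hx) (by omega)
      · have := hle 2 x (by omega) x.2 hx
        simp only [Fin.eta] at this
        omega
  have hbot : Twins (ofRank ρ) univ ⟨m - 2, by omega⟩ ⟨m - 1, by omega⟩ ∨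
      ρ ⟨m - 3, by omega⟩ = ρ ⟨m - 2, by omega⟩ := by
    by_cases h2 : ρ ⟨m - 3, by omega⟩ = ρ ⟨m - 2, by omega⟩
    · exact Or.inr h2
    left
    have h12 := hle (m - 3) (m - 2) (by omega) (by omega) (by omega)
    rcases (hle (m - 2) (m - 1) (by omega) (by omega) (by omega)).eq_or_lt with h | h
    · exact twins_of_eq ρ _ h
    · refine twins_of_lt ρ (by simp; omega) h (fun x hx => ?_) (fun x hx => ?_)
      · have hx' : (x : ℕ) < m - 2 := hx
        have := hle x (m - 3) x.2 (by omega) (by omega)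
        simp only [Fin.eta] at this
        omega
      · exact absurd (show m - 1 < (x : ℕ) from hx) (by omega)
  rcases htop with t1 | t1 <;> rcases hbot with t2 | t2
  · refine hdis _ _ _ _ ?_ ?_ ?_ t1 t2 <;> simp only [Fin.mk_lt_mk] <;> omega
  · refine hdis _ _ _ _ ?_ ?_ ?_ t1 (twins_of_eq ρ _ t2) <;> simp only [Fin.mk_lt_mk] <;> omega
  · refine hdis _ _ _ _ ?_ ?_ ?_ (twins_of_eq ρ _ t1) t2 <;> simp only [Fin.mk_lt_mk] <;> omega
  · by_cases h6 : 6 ≤ m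
    · refine hdis _ _ _ _ ?_ ?_ ?_ (twins_of_eq ρ _ t1) (twins_of_eq ρ _ t2) <;>
      simp only [Fin.mk_lt_mk] <;> omega
    · obtain rfl : m = 5 := by omega
      have t1' : ρ 1 = ρ 2 := t1
      have t2' : ρ 2 = ρ 3 := t2
      have e1 : f 3 = f 0 := H 1 2 3 0 (by decide) (twins_of_eq ρ _ t1') (by decide) (by decide)
        (by decide) (by decide)
      have e2 : f 4 = f 0 := H 1 2 4 0 (by decide) (twins_of_eq ρ _ t1') (by decide) (by decide)
        (by decide) (by decide)
      have e3 : f 1 = f 0 := H 2 3 1 0 (by decide) (twins_of_eq ρ _ t2') (by decide) (by decide)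
        (by decide) (by decide)
      have e4 : f 2 = f 0 := H 1 3 2 0 (by decide) (twins_of_eq ρ _ (t1'.trans t2'))
        (by decide) (by decide) (by decide) (by decide)
      have hall : ∀ x, f x = f 0 := by
        intro x
        fin_cases x
        · rfl
        · exact e3
        · exact e4
        · exact e1
        · exact e2
      intro x y
      rw [hall x, hall y]

lemma topInd_ofRank (ρ : Fin m → ℕ) (h0 : ∃ z, ρ z = 0) (x : Fin m) :
    topInd (ofRank ρ) x = if ρ x = 0 then 1 else 0 := by
  obtain ⟨z, hz⟩ := h0
  unfold topInd
  congr 1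
  simp only [ofRank, eq_iff_iff]
  exact ⟨fun h => by have := h z; omega, fun h y => by omega⟩

lemma Good.app_of_five (hs : Good s) (hm : 5 ≤ m) (hA : ∀ k < m, App s k) : App s m := by
  have htpos : 0 < s [m - 1, 1] 0 :=
    hs.two_eq (by omega) hA ▸ hs.two_pos (m := m) (by omega)
  refine ⟨s [m - 1, 1] 0, htpos, fun τ hsum hpos hlen => ?_⟩
  obtain ⟨ρ, hρ, hlt, hcard⟩ := exists_rank τ hsum hpos
  have hex : ∀ j < τ.length, ∃ x, ρ x = j := by
    intro j hj
    have h1 := hpos _ (List.getElem_mem hj)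
    rw [← hcard j hj, Finset.card_pos] at h1
    obtain ⟨x, hx⟩ := h1
    exact ⟨x, by simpa using hx⟩
  have hsc : ∀ x, sc s (ofRank ρ) univ x = s τ (ρ x) := fun x =>
    sc_eq s _ univ ρ τ (fun _ _ _ _ => Iff.rfl) (fun x _ => hlt x) hcard hpos (Finset.mem_univ x)
  have hconst := const_of_twins hm ρ hρ
    (fun x => sc s (ofRank ρ) univ x - s [m - 1, 1] 0 * topInd (ofRank ρ) x)
    fun b b' a c hb htw h1 h2 h3 h4 => hs.outside (by omega) hA _ hb h1 h2 h3 h4 htw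
  have h0 := hex 0 (by omega)
  obtain ⟨z, hz⟩ := hex (τ.length - 1) (by omega)
  have key : ∀ j < τ.length, s τ j = s [m - 1, 1] 0 * (if j = 0 then 1 else 0 : ℕ) := by
    intro j hj
    obtain ⟨x, rfl⟩ := hex j hj
    have := hconst x z
    simp only [hsc, topInd_ofRank ρ h0, hz, hs.last τ (τ.length - 1) (by omega)] at this
    rw [if_neg (show ¬ τ.length - 1 = 0 by omega)] at this
    simp only [Nat.cast_zero, mul_zero, sub_zero] at this
    linarith
  refine ⟨by simpa using key 0 (by omega), fun j hj hj2 => ?_⟩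
  rw [key j hj2, if_neg (by omega)]
  simp

end Five

/-! ### Four candidates -/

section Four

variable {s : List ℕ → ℕ → ℝ}

lemma Good.outside_four (hs : Good s) (hA : ∀ k < 4, App s k) (ρ : Fin 4 → ℕ) (τ : List ℕ)
    (hsc : ∀ x, sc s (ofRank ρ) univ x = s τ (ρ x)) (h0 : ∃ z, ρ z = 0) {b b' : Fin 4} (a c : Fin 4)
    (htw : Twins (ofRank ρ) univ b b') (hb : b ≠ b') (hba : b ≠ a)
    (hbc : b ≠ c) (hba' : b' ≠ a) (hbc' : b' ≠ c) :
    s τ (ρ a) - s [3, 1] 0 * (if ρ a = 0 then 1 else 0 : ℕ) =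
      s τ (ρ c) - s [3, 1] 0 * (if ρ c = 0 then 1 else 0 : ℕ) := by
  have := hs.outside le_rfl hA (ofRank ρ) hb hba hbc hba' hbc' htw
  rwa [hsc, hsc, topInd_ofRank ρ h0, topInd_ofRank ρ h0] at this

lemma Good.four_top_one (hs : Good s) (hA : ∀ k < 4, App s k) : s [1, 3] 0 = s [3, 1] 0 := by
  have hsc : ∀ x, sc s (ofRank ![0, 1, 1, 1]) univ x = s [1, 3] ((![0, 1, 1, 1] : Fin 4 → ℕ) x) :=
    fun x => sc_eq_two s _ univ _ 1 3 (fun _ _ _ _ => Iff.rfl) (by simp [Fin.forall_fin_succ])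
      (by simp [card_filter_fin4]) (by simp [card_filter_fin4]) (by simp) (by simp)
      (Finset.mem_univ x)
  have h := hs.outside_four hA _ _ hsc ⟨0, rfl⟩ (b := 2) (b' := 3) 0 1 (twins_of_eq _ _ rfl)
    (by decide) (by decide) (by decide) (by decide) (by decide)
  have l : s [1, 3] 1 = 0 := hs.last _ _ rfl
  simp [l] at h
  linarith

lemma Good.four_top_mid (hs : Good s) (hA : ∀ k < 4, App s k) :
    s [1, 2, 1] 0 = s [3, 1] 0 := by
  have hsc : ∀ x, sc s (ofRank ![0, 1, 1, 2]) univ x =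
      s [1, 2, 1] ((![0, 1, 1, 2] : Fin 4 → ℕ) x) :=
    fun x => sc_eq_three s _ univ _ 1 2 1 (fun _ _ _ _ => Iff.rfl) (by simp [Fin.forall_fin_succ])
      (by simp [card_filter_fin4]) (by simp [card_filter_fin4]) (by simp [card_filter_fin4])
      (by simp) (by simp) (by simp) (Finset.mem_univ x)
  have h := hs.outside_four hA _ _ hsc ⟨0, rfl⟩ (b := 1) (b' := 2) 0 3 (twins_of_eq _ _ rfl)
    (by decide) (by decide) (by decide) (by decide) (by decide)
  have l : s [1, 2, 1] 2 = 0 := hs.last _ _ rfl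
  simp [l] at h
  linarith

lemma sc_211 (s : List ℕ → ℕ → ℝ) (ρ : Fin 4 → ℕ) (h0 : (univ.filter fun x => ρ x = 0).card = 2)
    (h1 : (univ.filter fun x => ρ x = 1).card = 1) (h2 : (univ.filter fun x => ρ x = 2).card = 1)
    (h3 : ∀ x ∈ univ, ρ x < 3) (x : Fin 4) : sc s (ofRank ρ) univ x = s [2, 1, 1] (ρ x) :=
  sc_eq_three s _ univ _ 2 1 1 (fun _ _ _ _ => Iff.rfl) h3 h0 h1 h2
      (by simp) (by simp) (by simp) (Finset.mem_univ x)

lemma sc_22 (s : List ℕ → ℕ → ℝ) (ρ : Fin 4 → ℕ) (h0 : (univ.filter fun x => ρ x = 0).card = 2)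
    (h1 : (univ.filter fun x => ρ x = 1).card = 2)
    (h3 : ∀ x ∈ univ, ρ x < 2) (x : Fin 4) : sc s (ofRank ρ) univ x = s [2, 2] (ρ x) :=
  sc_eq_two s _ univ _ 2 2 (fun _ _ _ _ => Iff.rfl) h3 h0 h1 (by simp) (by simp)
    (Finset.mem_univ x)

lemma Good.four_second (hs : Good s) (hA : ∀ k < 4, App s k) : s [2, 1, 1] 1 = 0 := by
  have hsc := sc_211 s ![0, 0, 1, 2] (by simp [card_filter_fin4]) (by simp [card_filter_fin4])
    (by simp [card_filter_fin4]) (by simp [Fin.forall_fin_succ])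
  have h := hs.outside_four hA _ _ hsc ⟨0, rfl⟩ (b := 0) (b' := 1) 2 3 (twins_of_eq _ _ rfl)
    (by decide) (by decide) (by decide) (by decide) (by decide)
  have l : s [2, 1, 1] 2 = 0 := hs.last _ _ rfl
  simp [l] at h
  linarith

lemma sc_1111 (s : List ℕ → ℕ → ℝ) (ρ : Fin 4 → ℕ)
    (h : ∀ j < 4, (univ.filter fun x => ρ x = j).card = 1)
    (h3 : ∀ x ∈ univ, ρ x < 4) (x : Fin 4) : sc s (ofRank ρ) univ x = s [1, 1, 1, 1] (ρ x) := by
  refine sc_eq s _ univ _ [1, 1, 1, 1] (fun _ _ _ _ => Iff.rfl) h3 ?_ (by simp)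
    (Finset.mem_univ x)
  intro j hj
  rw [h j hj]
  have hj : j < 4 := hj
  interval_cases j <;> rfl

lemma Good.four_linear (hs : Good s) (hA : ∀ k < 4, App s k) :
    s [1, 1, 1, 1] 0 = s [3, 1] 0 ∧ s [1, 1, 1, 1] 1 = 0 ∧ s [1, 1, 1, 1] 2 = 0 := by
  have hsc := sc_1111 s ![0, 1, 2, 3] (by intro j hj; interval_cases j <;> simp [card_filter_fin4])
    (by simp [Fin.forall_fin_succ])
  have ht : ∀ b b' : Fin 4, (b : ℕ) + 1 = b' → Twins (ofRank ![0, 1, 2, 3]) univ b b' := by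
    intro b b' hb
    have hv : ∀ x : Fin 4, (![0, 1, 2, 3] : Fin 4 → ℕ) x = x := by
      intro x; fin_cases x <;> rfl
    refine twins_of_lt _ hb ?_ ?_ ?_
    · rw [hv, hv]; omega
    · intro x hx; rw [hv, hv]; exact hx
    · intro x hx; rw [hv, hv]; exact hx
  have h1 := hs.outside_four hA _ _ hsc ⟨0, rfl⟩ (b := 0) (b' := 1) 2 3 (ht _ _ rfl)
    (by decide) (by decide) (by decide) (by decide) (by decide)
  have h2 := hs.outside_four hA _ _ hsc ⟨0, rfl⟩ (b := 1) (b' := 2) 0 3 (ht _ _ rfl)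
    (by decide) (by decide) (by decide) (by decide) (by decide)
  have h3 := hs.outside_four hA _ _ hsc ⟨0, rfl⟩ (b := 2) (b' := 3) 0 1 (ht _ _ rfl)
    (by decide) (by decide) (by decide) (by decide) (by decide)
  have l : s [1, 1, 1, 1] 3 = 0 := hs.last _ _ rfl
  simp [l] at h1 h2 h3
  refine ⟨?_, ?_, ?_⟩ <;> linarith

/-- The common skeleton of the two remaining bounds: among `a = 0`, `c = 1` and a single clone
`b = 2`, first `b` and then `c` is eliminated, so `a` must not be the unique first elimination
when the second clone `b' = 3` is present. -/
lemma Good.four_obstruction (hs : Good s) (hA : ∀ k < 4, App s k) (cnt : Fin 4 → ℕ)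
    (w : Fin 4 → WeakOrder (Fin 4)) (htw : ∀ i, Twins (w i) univ 2 3)
    (h1 : appr cnt w {0, 1, 2} 2 ≤ appr cnt w {0, 1, 2} 0)
    (h2 : appr cnt w {0, 1, 2} 2 ≤ appr cnt w {0, 1, 2} 1)
    (h3 : appr cnt w {0, 1} 1 ≤ appr cnt w {0, 1} 0)
    (h4 : ∀ x : Fin 4, x ≠ 0 → score s cnt w univ 0 < score s cnt w univ x) : False := by
  refine not_mem_W_of_unique_lowest s cnt w univ (by simp) (Finset.mem_univ 0)
    (fun x _ hx => h4 x hx) ?_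
  rw [(hs.clone_pair cnt w univ (Finset.mem_univ 2) (Finset.mem_univ 3) (by decide) htw).1 0
    (Finset.mem_univ 0) (by decide) (by decide)]
  have e1 : (univ : Finset (Fin 4)).erase 3 = {0, 1, 2} := by ext x; fin_cases x <;> simp
  have e2 : ({0, 1, 2} : Finset (Fin 4)).erase 2 = {0, 1} := by ext x; fin_cases x <;> simp
  have e3 : ({0, 1} : Finset (Fin 4)).erase 1 = {0} := by ext x; fin_cases x <;> simp
  rw [e1]
  refine W_erase_of_lowest s cnt w _ (by simp) (c := 2) (by simp) ?_ ?_
  · intro d hd hd2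
    rw [App.score_le_iff (hA _ (by simp)) cnt w (by simp) hd]
    fin_cases d
    · exact h1
    · exact h2
    · exact absurd rfl hd2
    · simp at hd
  rw [e2]
  refine W_erase_of_lowest s cnt w _ (by simp) (c := 1) (by simp) ?_ ?_
  · intro d hd hd1
    rw [App.score_le_iff (hA _ (by simp)) cnt w (by simp) hd]
    fin_cases d
    · exact h3
    · exact absurd rfl hd1
    · simp at hd
    · simp at hd
  rw [e3, W_of_card_le_one _ _ _ _ (by simp)]
  simp

/-- A ballot `ac ≻ bb'` or `ac ≻ b ≻ b'` gives its top candidates at least `s [3, 1] 0`. -/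
lemma Good.four_lower (hs : Good s) (hA : ∀ k < 4, App s k) (r : ℕ) (T : ℝ)
    (hT : ∀ x : Fin 4, x = 0 ∨ x = 1 → sc s (ofRank ![0, 0, 1, r]) univ x = T)
    (hr' : Twins (ofRank (![0, 0, 1, r] : Fin 4 → ℕ)) univ 2 3) :
    s [3, 1] 0 ≤ T := by
  by_contra hlt
  rw [not_le] at hlt
  have htpos : 0 < s [3, 1] 0 :=
    hs.two_eq (m := 4) le_rfl hA ▸ hs.two_pos (m := 4) (by omega)
  obtain ⟨l0, l1, l2⟩ := hs.four_linear hA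
  have l3 : s [1, 1, 1, 1] 3 = 0 := hs.last _ _ rfl
  obtain ⟨L, hL⟩ := (eventually_lin (4 * T) _ _ hlt).exists
  set cnt : Fin 4 → ℕ := ![L + 1, L, L + 4, 2] with hcnt
  set w : Fin 4 → WeakOrder (Fin 4) :=
    ![bBot 0, bBot 1, ofRank ![0, 0, 1, r], ofRank ![2, 3, 0, 1]] with hw
  refine hs.four_obstruction hA cnt w ?_ ?_ ?_ ?_ ?_
  · intro i
    fin_cases i
    · intro x _ _ _; simp [hw, bBot, ofRank]
    · intro x _ _ _; simp [hw, bBot, ofRank]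
    · exact hr'
    · intro x _ h2 h3
      fin_cases x <;> simp [hw, ofRank] at h2 h3 ⊢
  · simp [appr, Fin.sum_univ_four, hcnt, hw, ofRank, bBot]
    omega
  · simp [appr, Fin.sum_univ_four, hcnt, hw, ofRank, bBot]
    omega
  · simp [appr, Fin.sum_univ_four, hcnt, hw, ofRank, bBot]
    omega
  · have hlin := sc_1111 s ![2, 3, 0, 1]
      (by intro j hj; interval_cases j <;> simp [card_filter_fin4]) (by simp [Fin.forall_fin_succ])
    have hsc : ∀ x, score s cnt w univ x = (L + 1) * sc s (bBot 0) univ x +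
        L * sc s (bBot 1) univ x + (L + 4) * sc s (ofRank ![0, 0, 1, r]) univ x +
        2 * s [1, 1, 1, 1] (![2, 3, 0, 1] x) := by
      intro x
      rw [← hlin]
      simp [score, Fin.sum_univ_four, hcnt, hw]
    have hT0 := hT 0 (by simp)
    have hT1 := hT 1 (by simp)
    have n2 := mul_nonneg (show (0 : ℝ) ≤ L + 4 by positivity)
      (sc_nonneg hs (ofRank ![0, 0, 1, r]) univ 2)
    have n3 := mul_nonneg (show (0 : ℝ) ≤ L + 4 by positivity)
      (sc_nonneg hs (ofRank ![0, 0, 1, r]) univ 3)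
    intro x hx
    rw [hsc, hsc]
    simp only [sc_bBot hs (show 2 ≤ 4 by omega), Nat.reduceSub]
    fin_cases x <;> simp [hT0, hT1, l0, l1, l2, l3] at hx n2 n3 ⊢ <;> linarith

/-- A ballot `bb' ≻ ac` or `bb' ≻ a ≻ c` gives its top candidates at most `s [3, 1] 0`. -/
lemma Good.four_upper (hs : Good s) (hA : ∀ k < 4, App s k) (r : ℕ) (hr : 1 ≤ r) (T : ℝ)
    (hT : ∀ x : Fin 4, x = 2 ∨ x = 3 → sc s (ofRank ![1, r, 0, 0]) univ x = T)
    (h0 : ∀ x : Fin 4, x = 0 ∨ x = 1 → sc s (ofRank ![1, r, 0, 0]) univ x = 0) :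
    T ≤ s [3, 1] 0 := by
  by_contra hlt
  rw [not_le] at hlt
  have he := hs.two_eq (m := 4) le_rfl hA
  have htpos : 0 < s [3, 1] 0 := he ▸ hs.two_pos (m := 4) (by omega)
  have he2 := hs.two_second (m := 4) (by omega)
  simp only [Nat.reduceSub] at he he2
  obtain ⟨K, hK⟩ := (eventually_lin (3 * s [3, 1] 0 + 1) _ _ hlt).exists
  set cnt : Fin 4 → ℕ := ![K, 2, K + 3, K + 4] with hcnt
  set w : Fin 4 → WeakOrder (Fin 4) :=
    ![ofRank ![1, r, 0, 0], ofRank ![1, 2, 0, 0], bTwo 0 1, bTwo 1 0] with hw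
  refine hs.four_obstruction hA cnt w ?_ ?_ ?_ ?_ ?_
  · intro i
    fin_cases i <;> intro x _ _ _ <;> simp [hw, bTwo, ofRank]
  · simp [appr, Fin.sum_univ_four, hcnt, hw, ofRank, bTwo]
  · simp [appr, Fin.sum_univ_four, hcnt, hw, ofRank, bTwo]
    split_ifs <;> omega
  · simp [appr, Fin.sum_univ_four, hcnt, hw, ofRank, bTwo]
    split_ifs <;> omega
  · have h211 := sc_211 s ![1, 2, 0, 0] (by simp [card_filter_fin4]) (by simp [card_filter_fin4])
      (by simp [card_filter_fin4]) (by simp [Fin.forall_fin_succ])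
    have hsc : ∀ x, score s cnt w univ x = K * sc s (ofRank ![1, r, 0, 0]) univ x +
        2 * s [2, 1, 1] (![1, 2, 0, 0] x) + (K + 3) * sc s (bTwo 0 1) univ x +
        (K + 4) * sc s (bTwo 1 0) univ x := by
      intro x
      rw [← h211]
      simp [score, Fin.sum_univ_four, hcnt, hw]
    have hT2 := hT 2 (by simp)
    have hT3 := hT 3 (by simp)
    have h00 := h0 0 (by simp)
    have h01 := h0 1 (by simp)
    have l1 := hs.four_second hA
    have l2 : s [2, 1, 1] 2 = 0 := hs.last _ _ rfl
    have n := hs.nn [2, 1, 1] 0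
    intro x hx
    rw [hsc, hsc]
    simp only [sc_bTwo hs (show 3 ≤ 4 by omega) (show (0 : Fin 4) ≠ 1 by decide),
      sc_bTwo hs (show 3 ≤ 4 by omega) (show (1 : Fin 4) ≠ 0 by decide), Nat.reduceSub, he, he2]
    fin_cases x <;> simp [hT2, hT3, h00, h01, l1, l2] at hx ⊢ <;> linarith

lemma Good.four_two_two (hs : Good s) (hA : ∀ k < 4, App s k) : s [2, 2] 0 = s [3, 1] 0 := by
  have l : s [2, 2] 1 = 0 := hs.last _ _ rfl
  have h1 := sc_22 s ![0, 0, 1, 1] (by simp [card_filter_fin4]) (by simp [card_filter_fin4])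
    (by simp [Fin.forall_fin_succ])
  have h2 := sc_22 s ![1, 1, 0, 0] (by simp [card_filter_fin4]) (by simp [card_filter_fin4])
    (by simp [Fin.forall_fin_succ])
  apply le_antisymm
  · refine hs.four_upper hA 1 le_rfl _ ?_ ?_
    · rintro x (rfl | rfl) <;> simp [h2]
    · rintro x (rfl | rfl) <;> simp [h2, l]
  · refine hs.four_lower hA 1 _ ?_ (twins_of_eq _ _ rfl)
    rintro x (rfl | rfl) <;> simp [h1]

lemma Good.four_two_one_one (hs : Good s) (hA : ∀ k < 4, App s k) :
    s [2, 1, 1] 0 = s [3, 1] 0 := by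
  have l := hs.four_second hA
  have l' : s [2, 1, 1] 2 = 0 := hs.last _ _ rfl
  have h1 := sc_211 s ![0, 0, 1, 2] (by simp [card_filter_fin4]) (by simp [card_filter_fin4])
    (by simp [card_filter_fin4]) (by simp [Fin.forall_fin_succ])
  have h2 := sc_211 s ![1, 2, 0, 0] (by simp [card_filter_fin4]) (by simp [card_filter_fin4])
    (by simp [card_filter_fin4]) (by simp [Fin.forall_fin_succ])
  apply le_antisymm
  · refine hs.four_upper hA 2 (by omega) _ ?_ ?_
    · rintro x (rfl | rfl) <;> simp [h2]
    · rintro x (rfl | rfl) <;> simp [h2, l, l']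
  · refine hs.four_lower hA 2 _ ?_ ?_
    · rintro x (rfl | rfl) <;> simp [h1]
    · intro x _ h2 h3
      fin_cases x <;> simp [ofRank] at h2 h3 ⊢

lemma Good.app_four (hs : Good s) : App s 4 := by
  have hA : ∀ k < 4, App s k := by
    intro k hk
    interval_cases k
    · exact app_zero s
    · exact app_one s
    · exact hs.app_two
    · exact hs.app_three
  have he : s [1, 1, 2] 0 = s [3, 1] 0 := hs.two_eq (m := 4) le_rfl hA
  have htpos : 0 < s [3, 1] 0 := he ▸ hs.two_pos (m := 4) (by omega)
  have he2 : s [1, 1, 2] 1 = 0 := hs.two_second (m := 4) (by omega)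
  have hm2 : s [1, 2, 1] 1 = 0 := hs.mid_second (m := 4) (by omega)
  have hl := hs.four_linear hA
  refine ⟨s [3, 1] 0, htpos, fun τ h0 hp hlen => ?_⟩
  rcases τ with _ | ⟨x, _ | ⟨y, _ | ⟨z, _ | ⟨u, _ | ⟨u', τ⟩⟩⟩⟩⟩
  · simp at hlen
  · simp at hlen
  · have hx := hp x (by simp)
    have hy := hp y (by simp)
    simp at h0
    have hj : ∀ j, 1 ≤ j → j < 2 → s [x, y] j = 0 := by
      intro j h1 h2
      obtain rfl : j = 1 := by omega
      exact hs.last _ _ rfl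
    refine ⟨?_, hj⟩
    obtain ⟨rfl, rfl⟩ | ⟨rfl, rfl⟩ | ⟨rfl, rfl⟩ : x = 1 ∧ y = 3 ∨ x = 2 ∧ y = 2 ∨ x = 3 ∧ y = 1 := by
      omega
    · exact hs.four_top_one hA
    · exact hs.four_two_two hA
    · rfl
  · have hx := hp x (by simp)
    have hy := hp y (by simp)
    have hz := hp z (by simp)
    simp at h0
    have hj : s [x, y, z] 1 = 0 → ∀ j, 1 ≤ j → j < 3 → s [x, y, z] j = 0 := by
      intro h j h1 h2
      obtain rfl | rfl : j = 1 ∨ j = 2 := by omega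
      · exact h
      · exact hs.last _ _ rfl
    obtain ⟨rfl, rfl, rfl⟩ | ⟨rfl, rfl, rfl⟩ | ⟨rfl, rfl, rfl⟩ :
        x = 1 ∧ y = 1 ∧ z = 2 ∨ x = 1 ∧ y = 2 ∧ z = 1 ∨ x = 2 ∧ y = 1 ∧ z = 1 := by
      omega
    · exact ⟨he, hj he2⟩
    · exact ⟨hs.four_top_mid hA, hj hm2⟩
    · exact ⟨hs.four_two_one_one hA, hj (hs.four_second hA)⟩
  · have hx := hp x (by simp)
    have hy := hp y (by simp)
    have hz := hp z (by simp)
    have hu := hp u (by simp)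
    simp at h0
    obtain ⟨rfl, rfl, rfl, rfl⟩ : x = 1 ∧ y = 1 ∧ z = 1 ∧ u = 1 := by omega
    refine ⟨hl.1, fun j h1 h2 => ?_⟩
    have h2 : j < 4 := h2
    obtain rfl | rfl | rfl : j = 1 ∨ j = 2 ∨ j = 3 := by omega
    · exact hl.2.1
    · exact hl.2.2
    · exact hs.last _ _ rfl
  · have hx := hp x (by simp)
    have hy := hp y (by simp)
    have hz := hp z (by simp)
    have hu := hp u (by simp)
    have hu' := hp u' (by simp)
    simp at h0
    omega

lemma Good.app (hs : Good s) (M : ℕ) : App s M := by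
  induction M using Nat.strong_induction_on with
  | _ M ih =>
    by_cases h5 : 5 ≤ M
    · exact hs.app_of_five h5 ih
    · have : M < 5 := by omega
      interval_cases M
      · exact app_zero s
      · exact app_one s
      · exact hs.app_two
      · exact hs.app_three
      · exact hs.app_four

end Four

/-- Characterization of Approval-IRV: if the elimination
scoring rule of a monotone scoring system `s` (defined on profiles of weak
orders over all finite candidate sets) satisfies independence of clones and
respects cohesive majorities, then it agrees with Approval-IRV on every
profile; equivalently, for every number `m` of candidates there is a constant
`lam > 0` with `s(τ) = lam · (1,0,…,0)` for every order type `τ` (of length at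
least 2) on `m` candidates. -/
theorem approvalIRV_characterization_clones_majorities
    (s : List ℕ → ℕ → ℝ)
    (hnn : NonnegSys s) (hlz : LastZeroSys s) (hmono : MonotoneSys s)
    (hclones : ∀ (m n : ℕ) (P : Fin n → WeakOrder (Fin m))
        (A X : Finset (Fin m)), IsCloneSet P A X → ∀ xhat ∈ X,
      (∀ c ∈ A, c ∉ X →
        (c ∈ winners s P A ↔ c ∈ winners s P (A \ X.erase xhat))) ∧
      (xhat ∈ winners s P (A \ X.erase xhat) ↔
        (X ∩ winners s P A).Nonempty))
    (hmaj : ∀ (m n : ℕ) (P : Fin n → WeakOrder (Fin m))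
        (A : Finset (Fin m)) (S : Finset (Fin n)),
      n < 2 * S.card →
      (∃ c ∈ A, ∀ i ∈ S, c ∈ (P i).topSet A) →
      winners s P A ⊆ S.biUnion fun i => (P i).topSet A) :
    (∀ (m n : ℕ) (P : Fin n → WeakOrder (Fin m)) (A : Finset (Fin m)),
        winners s P A = winners approvalScoring P A) ∧
    (∀ m : ℕ, ∃ lam : ℝ, 0 < lam ∧
        ∀ τ : List ℕ, τ.sum = m → (∀ x ∈ τ, 0 < x) → 2 ≤ τ.length →
          s τ 0 = lam ∧ ∀ j, 1 ≤ j → j < τ.length → s τ j = 0) := by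
  have hs : Good s := ⟨hnn, hlz, hmono, hclones, hmaj⟩
  refine ⟨fun m n P A => ?_, hs.app⟩
  rw [winners_eq_W, winners_eq_W]
  exact W_congr_app approvalScoring hs.app app_approvalScoring _ _ _
end

section
/- Split-IRV is not indifference monotonic: there exists a profile P of weak orders, a winner c ∈ SplitIRV(P), and a profile P̂ obtained from P by applying c-hovers to some of the votes, such that c ∉ SplitIRV(P̂). -/
/-!
The counterexample has three candidates `c = 0`, `a = 1`, `b = 2` and nine voters: one voter
`a ≻ c ≻ b`, two voters `a ≻ b ≻ c`, three voters `b ≻ c ≻ a`, and three voters `c ≻ a ∼ b`.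

* In the original profile all three candidates have score `3`. Eliminating `b` transfers three
  points to `c`, who then beats `a` by `6` to `3`; hence `c` is a winner.
* The `c`-hover turns the first vote into `a ∼ c ≻ b`. The scores become `3.5` for `c`, `2.5` for
  `a` and `3` for `b`, so `a` alone is eliminated, and then `b` beats `c` by `5` to `4`.

Under `splitScoring` a candidate of `A` earns `1 / |topSet A|` from a vote if it is in the top class
and the vote is not indifferent on `A`, and nothing otherwise (`splitScoring_orderType`). For votes
given by rank functions this turns the rule into the evaluable function `rankWinnersAux` with
rational scores (`winnersAux_ofRank`), and the two elections above are then checked by evaluation.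
-/


open Finset

attribute [local instance] Classical.propDecidable

section Reduction

variable {C N : Type*} [DecidableEq C]

namespace WeakOrder

lemma classIdx_eq_zero_iff (w : WeakOrder C) (A : Finset C) (a : C) :
    w.classIdx A a = 0 ↔ ∀ d ∈ A, w.rel a d := by
  rw [classIdx, card_eq_zero, image_eq_empty, filter_eq_empty_iff]
  constructor
  · intro h d hd
    by_contra hn
    exact h hd ⟨(w.total a d).resolve_left hn, hn⟩
  · exact fun h d hd hs => hs.2 (h d hd)

lemma cardAbove_eq_zero_iff (w : WeakOrder C) (A : Finset C) (a : C) :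
    w.cardAbove A a = 0 ↔ ∀ d ∈ A, w.rel a d := by
  rw [← classIdx_eq_zero_iff]
  simp [classIdx, cardAbove]

/-- Relative to a top candidate `a`, there are at least two indifference classes exactly when
some candidate of `A` is strictly below `a`. -/
lemma two_le_numClasses_iff (w : WeakOrder C) (A : Finset C) {a : C} (ha : a ∈ A)
    (htop : ∀ d ∈ A, w.rel a d) :
    2 ≤ w.numClasses A ↔ ∃ d ∈ A, ¬ w.rel d a := by
  have h0 : w.cardAbove A a = 0 := (w.cardAbove_eq_zero_iff A a).2 htop
  change 1 < (A.image (w.cardAbove A)).card ↔ _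
  rw [one_lt_card]
  constructor
  · rintro ⟨x, hx, y, hy, hxy⟩
    by_contra! hn
    have key : ∀ z ∈ A.image (w.cardAbove A), z = 0 := by
      intro z hz
      obtain ⟨d, hd, rfl⟩ := mem_image.1 hz
      exact (w.cardAbove_eq_zero_iff A d).2 fun e he =>
        w.trans _ _ _ (hn d hd) (htop e he)
    exact hxy ((key x hx).trans (key y hy).symm)
  · rintro ⟨d, hd, hda⟩
    refine ⟨_, mem_image_of_mem _ ha, _, mem_image_of_mem _ hd, ?_⟩
    rw [h0]
    exact fun h => hda ((w.cardAbove_eq_zero_iff A d).1 h.symm a ha)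

/-- The score of a single vote, in terms of the top class only. -/
lemma splitScoring_orderType (w : WeakOrder C) (A : Finset C) {a : C} (ha : a ∈ A) :
    splitScoring (w.orderType A) (w.classIdx A a) =
      if (∀ d ∈ A, w.rel a d) ∧ ∃ d ∈ A, ¬ w.rel d a then ((w.topSet A).card : ℝ)⁻¹ else 0 := by
  have hlen : (w.orderType A).length = w.numClasses A := by simp [orderType]
  unfold splitScoring
  rw [hlen]
  have hiff : (w.classIdx A a = 0 ∧ 2 ≤ w.numClasses A) ↔
      ((∀ d ∈ A, w.rel a d) ∧ ∃ d ∈ A, ¬ w.rel d a) := by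
    rw [classIdx_eq_zero_iff]
    exact and_congr_right fun h => w.two_le_numClasses_iff A ha h
  by_cases h : w.classIdx A a = 0 ∧ 2 ≤ w.numClasses A
  · rw [if_pos h, if_pos (hiff.1 h)]
    obtain ⟨k, hk⟩ : ∃ k, w.numClasses A = k + 1 := ⟨w.numClasses A - 1, by omega⟩
    simp [orderType, hk, List.range_succ_eq_map, topSet, classIdx_eq_zero_iff]
  · rw [if_neg h, if_neg (fun h' => h (hiff.2 h'))]

end WeakOrder

end Reduction

section Evaluation

-- The definitions of this section must reduce. Redeclaring the genuine decision procedures gives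
-- them precedence over `Classical.propDecidable`.
attribute [local instance] instDecidableAnd instDecidableOr instDecidableNot instDecidableIff
  instDecidableForall Nat.decLe Rat.instDecidableLe Finset.decidableMem
  Finset.decidableDforallFinset Finset.decidableExistsAndFinset
  Nat.decidableForallFin Nat.decidableExistsFin instDecidableEqFin instDecidableEqNat

variable {C N : Type*} [DecidableEq C] [Fintype N]

/-- The Split-IRV score of `a` within `A`, as a rational number, when voter `i` ranks the
candidates by `ρ i` (smaller rank = more preferred). -/
def rankScore (ρ : N → C → ℕ) (A : Finset C) (a : C) : ℚ :=
  ∑ i : N, if (∀ d ∈ A, ρ i a ≤ ρ i d) ∧ ∃ d ∈ A, ¬ ρ i d ≤ ρ i a then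
    ((A.filter fun c => ∀ d ∈ A, ρ i c ≤ ρ i d).card : ℚ)⁻¹ else 0

/-- Evaluable counterpart of `winnersAux splitScoring` for a profile of rank functions. -/
def rankWinnersAux (ρ : N → C → ℕ) : ℕ → Finset C → Finset C
  | 0, A => A
  | n + 1, A =>
    if A.card ≤ 1 then A
    else (A.filter fun c => ∀ d ∈ A, rankScore ρ A c ≤ rankScore ρ A d).biUnion
      fun c => rankWinnersAux ρ n (A.erase c)

lemma totalScore_ofRank (ρ : N → C → ℕ) (A : Finset C) {a : C} (ha : a ∈ A) :
    totalScore splitScoring (fun i => ofRank (ρ i)) A a = (rankScore ρ A a : ℝ) := by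
  unfold totalScore rankScore
  push_cast
  refine Finset.sum_congr rfl fun i _ => ?_
  rw [WeakOrder.splitScoring_orderType _ _ ha]
  unfold WeakOrder.topSet ofRank
  dsimp only
  split_ifs
  · push_cast
    congr!
  · simp

lemma winnersAux_ofRank (ρ : N → C → ℕ) (n : ℕ) (A : Finset C) :
    winnersAux splitScoring (fun i => ofRank (ρ i)) n A = rankWinnersAux ρ n A := by
  induction n generalizing A with
  | zero => rfl
  | succ n ih =>
    have hlow : lowest splitScoring (fun i => ofRank (ρ i)) A =
        A.filter fun c => ∀ d ∈ A, rankScore ρ A c ≤ rankScore ρ A d := by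
      ext c
      simp only [lowest, mem_filter]
      refine and_congr_right fun hc => forall₂_congr fun d hd => ?_
      rw [totalScore_ofRank ρ A hc, totalScore_ofRank ρ A hd, Rat.cast_le]
    simp only [winnersAux, rankWinnersAux, hlow, ih]

/-- The ranks in the original profile; the entries of each vector are the ranks of
`c = 0`, `a = 1`, `b = 2`. -/
def ranksBefore : Fin 9 → Fin 3 → ℕ :=
  ![![1, 0, 2], ![2, 0, 1], ![2, 0, 1], ![1, 2, 0], ![1, 2, 0], ![1, 2, 0],
    ![0, 1, 1], ![0, 1, 1], ![0, 1, 1]]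

/-- The ranks after the first voter has changed `a ≻ c ≻ b` into `a ∼ c ≻ b`. -/
def ranksAfter : Fin 9 → Fin 3 → ℕ :=
  ![![0, 0, 2], ![2, 0, 1], ![2, 0, 1], ![1, 2, 0], ![1, 2, 0], ![1, 2, 0],
    ![0, 1, 1], ![0, 1, 1], ![0, 1, 1]]

lemma mem_rankWinnersAux_ranksBefore :
    (0 : Fin 3) ∈ rankWinnersAux ranksBefore 3 Finset.univ := by
  decide +kernel

lemma notMem_rankWinnersAux_ranksAfter :
    (0 : Fin 3) ∉ rankWinnersAux ranksAfter 3 Finset.univ := by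
  decide +kernel

lemma isCHover_ranks :
    IsCHover (ofRank (ranksBefore 0)) (ofRank (ranksAfter 0)) 0 := by
  unfold IsCHover WeakOrder.indiff WeakOrder.strict ofRank
  decide

lemma ranks_eq_of_ne_zero : ∀ i : Fin 9, i ≠ 0 → ranksAfter i = ranksBefore i := by
  decide

end Evaluation

/-- Split-IRV is not indifference monotonic: there exist a
profile `P` of weak orders, a Split-IRV winner `c` of `P`, and a profile `P̂`
obtained from `P` by applying `c`-hovers to some of the votes, such that `c` is
not a Split-IRV winner of `P̂`. -/
theorem splitIRV_not_indifference_monotonic :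
    ∃ (m n : ℕ) (P Phat : Fin n → WeakOrder (Fin m)) (c : Fin m),
      (∀ i, Phat i = P i ∨ IsCHover (P i) (Phat i) c) ∧
      c ∈ winners splitScoring P Finset.univ ∧
      c ∉ winners splitScoring Phat Finset.univ := by
  refine ⟨3, 9, fun i => ofRank (ranksBefore i), fun i => ofRank (ranksAfter i), 0,
    fun i => ?_, ?_, ?_⟩
  · by_cases hi : i = 0
    · subst hi
      exact Or.inr isCHover_ranks
    · exact Or.inl (congrArg ofRank (ranks_eq_of_ne_zero i hi))
  · unfold winners
    rw [winnersAux_ofRank, Finset.card_fin]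
    exact mem_rankWinnersAux_ranksBefore
  · unfold winners
    rw [winnersAux_ofRank, Finset.card_fin]
    exact notMem_rankWinnersAux_ranksAfter
end
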